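/- arXiv:1403.6539 — 2 statements merged into one kernel-verified Lean document; each statement's English description precedes it below -/
import Mathlib

section
/- Suppose K is algebraically closed, β ≠ 0, and φ ∈ K[t₁,…,tₙ] is not a constant. Then the Krull dimension (in the sense of Gabriel–Rentschler) of the down-up algebra A(α,β,φ) equals n+3. -/
open MvPolynomial

namespace DownUp

inductive Gen | u | d

variable {K : Type} [Field K] {n : ℕ}

/-- Free algebra over the polynomial base ring on generators u, d. -/
abbrev F (K : Type) [Field K] (n : ℕ) := FreeAlgebra (MvPolynomial (Fin n) K) Gen

noncomputable def uF : F K n := FreeAlgebra.ι _ Gen.u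
noncomputable def dF : F K n := FreeAlgebra.ι _ Gen.d

/-- The defining relations of the down-up algebra over K[t₁,…,tₙ]. -/
inductive Rel (α β : K) (φ : MvPolynomial (Fin n) K) : F K n → F K n → Prop
  | ddu : Rel α β φ (dF * dF * uF)
      (α • (dF * uF * dF) + β • (uF * dF * dF) + algebraMap _ _ φ * dF)
  | duu : Rel α β φ (dF * uF * uF)
      (α • (uF * dF * uF) + β • (uF * uF * dF) + uF * algebraMap _ _ φ)

/-- The down-up algebra A(α,β,φ) over K[t₁,…,tₙ]. -/
abbrev A (α β : K) (φ : MvPolynomial (Fin n) K) := RingQuot (Rel α β φ)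

noncomputable def U (α β : K) (φ : MvPolynomial (Fin n) K) : A α β φ :=
  RingQuot.mkAlgHom K _ uF
noncomputable def D (α β : K) (φ : MvPolynomial (Fin n) K) : A α β φ :=
  RingQuot.mkAlgHom K _ dF

/-- Image of the base polynomial ring in A. -/
noncomputable def T (α β : K) (φ : MvPolynomial (Fin n) K) :
    MvPolynomial (Fin n) K →ₐ[K] A α β φ :=
  (RingQuot.mkAlgHom K (Rel α β φ)).comp (IsScalarTower.toAlgHom K (MvPolynomial (Fin n) K) (F K n))

end DownUp
/-- `krullLE A' k M` says the Gabriel–Rentschler Krull dimension of the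
A'-module M is < k (i.e. ≤ k − 1): for k = 0 this means M = 0, and
κ(M) ≤ k means every descending chain of submodules has all but finitely many
successive factors of Krull dimension ≤ k − 1. -/
def krullLE (A' : Type) [Ring A'] :
    ℕ → (M : Type) → [AddCommGroup M] → [Module A' M] → Prop
  | 0, M, _, _ => Subsingleton M
  | k + 1, M, _, _ => ∀ f : ℕ → Submodule A' M, Antitone f →
      ∀ᶠ i in Filter.atTop,
        krullLE A' k (↥(f i) ⧸ Submodule.comap (f i).subtype (f (i + 1)))

/-!
Write `α = lam + mu`, `β = -(lam * mu)` and `w = du - mu ud`. The defining relations become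
`du = mu ud + w`, `dw = lam wd + φd`, `wu = lam uw + φu`, so `A` is spanned over `K[t]` by the
ordered monomials `uⁱ wᵏ dʲ`, and multiplication by `u`, `w` or `d` shifts leading monomials up to
a unit. Ideals of leading coefficients therefore embed the left ideals of `A` strictly
monotonically into the monotone maps from `ℕ³` to the ideals of `K[t]`. Each factor `ℕ` raises the
deviation by at most one, so the deviation is at most `n + 3`.

For the lower bound, let `A` act on the free `K[t][w]`-module with basis `uⁱ dʲ`, a cyclic module.
Bounding `j` from below gives a descending chain each of whose factors is free over `K[t][w]` on
the images of the `uⁱ dʲ` with `j` fixed, its row. A maximal ideal of `K[t][w]` containing `w` and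
`φ` has height `n + 1`, and modulo it `d` annihilates every row, so that the powers of `u`
contribute one further descending chain.
-/

open Filter

/-- `DeviationLT k a b` says that the deviation of the interval `[a, b]` of a partially ordered set
is less than `k`. The base case is phrased as `¬ a < b`, so that degenerate intervals have
deviation less than every `k`. -/
def DeviationLT {P : Type*} [PartialOrder P] : ℕ → P → P → Prop
  | 0, a, b => ¬ a < b
  | k + 1, a, b => ∀ f : ℕ → P, Antitone f → (∀ i, f i ∈ Set.Icc a b) →
      ∀ᶠ i in atTop, DeviationLT k (f (i + 1)) (f i)

namespace DeviationLT

section PartialOrder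

variable {P Q : Type*} [PartialOrder P] [PartialOrder Q] {k : ℕ}

theorem of_not_lt {a b : P} (h : ¬ a < b) : DeviationLT k a b := by
  induction k generalizing a b with
  | zero => exact h
  | succ k ih =>
    intro f _ hf
    exact .of_forall fun i => ih fun hlt => h ((hf (i + 1)).1.trans_lt (hlt.trans_le (hf i).2))

theorem of_strictMonoOn {g : P → Q} {a b : P} {a' b' : Q} (hg : StrictMonoOn g (Set.Icc a b))
    (ha : a' ≤ g a) (hb : g b ≤ b') (h : DeviationLT k a' b') : DeviationLT k a b := by
  induction k generalizing a b a' b' with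
  | zero =>
    intro hab
    exact h (ha.trans_lt ((hg ⟨le_rfl, hab.le⟩ ⟨hab.le, le_rfl⟩ hab).trans_le hb))
  | succ k ih =>
    intro f hf hfab
    have hab : a ≤ b := (hfab 0).1.trans (hfab 0).2
    have hgf : ∀ᶠ i in atTop, DeviationLT k (g (f (i + 1))) (g (f i)) :=
      h (g ∘ f) (fun i j hij => hg.monotoneOn (hfab j) (hfab i) (hf hij)) fun i =>
        ⟨ha.trans (hg.monotoneOn ⟨le_rfl, hab⟩ (hfab i) (hfab i).1),
          (hg.monotoneOn (hfab i) ⟨hab, le_rfl⟩ (hfab i).2).trans hb⟩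
    filter_upwards [hgf] with i hi
    exact ih (hg.mono (Set.Icc_subset_Icc (hfab _).1 (hfab _).2)) le_rfl le_rfl hi

theorem of_strictMono {g : P → Q} (hg : StrictMono g) {a b : P}
    (h : DeviationLT k (g a) (g b)) : DeviationLT k a b :=
  of_strictMonoOn (hg.strictMonoOn _) le_rfl le_rfl h

theorem mono {a b a' b' : P} (ha : a' ≤ a) (hb : b ≤ b') (h : DeviationLT k a' b') :
    DeviationLT k a b :=
  of_strictMonoOn strictMonoOn_id ha hb h

theorem prod {a b : P × Q} (h₁ : DeviationLT k a.1 b.1) (h₂ : DeviationLT k a.2 b.2) :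
    DeviationLT k a b := by
  induction k generalizing a b with
  | zero => exact fun hab => (Prod.lt_iff.1 hab).elim (fun h => h₁ h.1) fun h => h₂ h.2
  | succ k ih =>
    intro f hf hfab
    filter_upwards [h₁ (fun i => (f i).1) (fun i j h => (hf h).1)
        fun i => ⟨(hfab i).1.1, (hfab i).2.1⟩,
      h₂ (fun i => (f i).2) (fun i j h => (hf h).2)
        fun i => ⟨(hfab i).1.2, (hfab i).2.2⟩] with i hi₁ hi₂
    exact ih hi₁ hi₂

theorem pi {ι : Type*} [Finite ι] {a b : ι → P} (h : ∀ x, DeviationLT k (a x) (b x)) :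
    DeviationLT k a b := by
  induction k generalizing a b with
  | zero => exact fun hab => (Pi.lt_def.1 hab).2.elim h
  | succ k ih =>
    intro f hf hfab
    filter_upwards [eventually_all.2 fun x => h x (fun i => f i x) (fun i j hij => hf hij x)
      fun i => ⟨(hfab i).1 x, (hfab i).2 x⟩] with i hi
    exact ih hi

end PartialOrder

end DeviationLT

section MonotoneSequences

variable {ι L : Type*} [PartialOrder L]

theorem exists_apply_lt_of_orderHom_lt [Preorder ι] {a b : ι →o L} (h : a < b) : ∃ n, a n < b n :=
  (Pi.lt_def.1 (show (a : ι → L) < b from h)).2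

theorem wellFoundedGT_orderHom [Preorder ι] [WellQuasiOrderedLE ι] [WellFoundedGT L] :
    WellFoundedGT (ι →o L) := by
  refine ⟨RelEmbedding.wellFounded_iff_isEmpty.2 ⟨fun f => ?_⟩⟩
  have hf : StrictMono f := fun m n hmn => f.map_rel_iff.2 hmn
  choose x hx using fun n : ℕ => exists_apply_lt_of_orderHom_lt (hf n.lt_succ_self)
  obtain ⟨s, hs⟩ := (wellQuasiOrdered_le (α := ι)).exists_monotone_subseq x
  refine not_strictMono_of_wellFoundedGT (fun n => f (s n) (x (s n)))
    (strictMono_nat_of_lt_succ fun n => ?_)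
  calc f (s n) (x (s n)) < f (s n + 1) (x (s n)) := hx (s n)
    _ ≤ f (s (n + 1)) (x (s n)) := hf.monotone (s.strictMono n.lt_succ_self) _
    _ ≤ f (s (n + 1)) (x (s (n + 1))) := (f (s (n + 1))).monotone (hs _ _ n.le_succ)

/-- The tail `n ↦ c (n + T)` of a monotone sequence. -/
def monotoneTail (T : ℕ) (c : ℕ →o L) : ℕ →o L :=
  ⟨fun n => c (n + T), fun _ _ h => c.monotone (Nat.add_le_add_right h T)⟩

theorem eventually_eq_monotonicSequenceLimit [WellFoundedGT L] (a : ℕ →o L) :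
    ∀ᶠ n in atTop, a n = monotonicSequenceLimit a := by
  obtain ⟨N, hN⟩ := WellFoundedGT.monotone_chain_condition a
  have hlim : monotonicSequenceLimit a = a N :=
    (hN _ (le_max_left N (monotonicSequenceLimitIndex a)) ▸
      a.monotone (le_max_right N (monotonicSequenceLimitIndex a))).antisymm
      (le_monotonicSequenceLimit a N)
  filter_upwards [eventually_ge_atTop N] with n hn
  rw [hlim, hN n hn]

theorem monotone_monotonicSequenceLimit [WellFoundedGT L] :
    Monotone (monotonicSequenceLimit : (ℕ →o L) → L) :=
  fun _ b hab => (hab _).trans (le_monotonicSequenceLimit b _)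

namespace DeviationLT

variable {k : ℕ} {a b : ℕ →o L}

theorem of_head_of_tail (T : ℕ) (head : ∀ n < T, DeviationLT k (a n) (b n))
    (tail : DeviationLT k (monotoneTail T a) (monotoneTail T b)) : DeviationLT k a b := by
  let split : (ℕ →o L) → (Fin T → L) × (ℕ →o L) := fun c => (fun x => c x, monotoneTail T c)
  have split_mono : Monotone split := fun _ _ h => ⟨fun x => h x, fun n => h (n + T)⟩
  have split_injective : Function.Injective split := by
    intro c d hcd
    ext n
    rcases lt_or_ge n T with hn | hn
    · exact congrFun (congrArg Prod.fst hcd) ⟨n, hn⟩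
    · have htail : c (n - T + T) = d (n - T + T) :=
        DFunLike.congr_fun (congrArg Prod.snd hcd) (n - T)
      rwa [Nat.sub_add_cancel hn] at htail
  exact of_strictMono (split_mono.strictMono_of_injective split_injective)
    (prod (pi fun x => head x x.2) tail)

/-- Along a descending chain of monotone sequences the limits descend in `L`, so almost all steps
are small far out; only finitely many early terms remain. -/
theorem orderHom [WellFoundedGT L] (h : ∀ n, DeviationLT k (a n) (b n)) :
    DeviationLT (k + 1) a b := by
  induction k generalizing a b with
  | zero => exact of_not_lt fun hab => (exists_apply_lt_of_orderHom_lt hab).elim h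
  | succ k ih =>
    intro f hf hfab
    have hlim : DeviationLT (k + 1) (monotonicSequenceLimit a) (monotonicSequenceLimit b) := by
      obtain ⟨n, han, hbn⟩ := ((eventually_eq_monotonicSequenceLimit a).and
        (eventually_eq_monotonicSequenceLimit b)).exists
      exact han ▸ hbn ▸ h n
    filter_upwards [hlim (fun i => monotonicSequenceLimit (f i))
      (fun i j hij => monotone_monotonicSequenceLimit (hf hij)) fun i =>
        ⟨monotone_monotonicSequenceLimit (hfab i).1, monotone_monotonicSequenceLimit (hfab i).2⟩]
      with i hi
    obtain ⟨T, hT⟩ := eventually_atTop.1 ((eventually_eq_monotonicSequenceLimit (f (i + 1))).and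
      (eventually_eq_monotonicSequenceLimit (f i)))
    refine of_head_of_tail T (fun n _ => mono ((hfab _).1 n) ((hfab _).2 n) (h n)) (ih fun n => ?_)
    obtain ⟨h₁, h₂⟩ := hT (n + T) (Nat.le_add_left T n)
    exact h₁.symm ▸ h₂.symm ▸ hi

end DeviationLT

end MonotoneSequences

section KrullLE

variable {A M : Type*} [Ring A] [AddCommGroup M] [Module A M]

theorem deviationLT_quotient_iff {k : ℕ} {X Y : Submodule A M} (hXY : X ≤ Y) :
    DeviationLT k (⊥ : Submodule A (Y ⧸ X.comap Y.subtype)) ⊤ ↔ DeviationLT k X Y := by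
  set q := (X.comap Y.subtype).mkQ
  constructor
  · refine DeviationLT.of_strictMonoOn (g := fun Z => (Z.comap Y.subtype).map q) ?_ bot_le le_top
    intro Z hZ Z' hZ' hlt
    refine lt_of_le_not_ge (Submodule.map_mono (Submodule.comap_mono hlt.le)) fun hle =>
      hlt.not_ge fun z hz => ?_
    obtain ⟨t, ht, hteq⟩ := hle (Submodule.mem_map_of_mem (f := q)
      (show ⟨z, hZ'.2 hz⟩ ∈ Z'.comap Y.subtype from hz))
    have htz : t - ⟨z, hZ'.2 hz⟩ ∈ X.comap Y.subtype := (Submodule.Quotient.eq _).1 hteq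
    exact (Z.sub_mem_iff_right ht).1 (hZ.1 htz)
  · refine DeviationLT.of_strictMonoOn (g := fun Z => (Z.comap q).map Y.subtype) ?_ ?_
      (Submodule.map_subtype_le _ _)
    · exact ((Submodule.map_strictMono_of_injective Y.injective_subtype).comp
        (Submodule.comap_strictMono_of_surjective (Submodule.mkQ_surjective _))).strictMonoOn _
    · intro x hx
      exact ⟨⟨x, hXY hx⟩, (Submodule.Quotient.mk_eq_zero _).2 hx, rfl⟩

end KrullLE

theorem krullLE_iff_deviationLT {A M : Type} [Ring A] [AddCommGroup M] [Module A M] {k : ℕ} :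
    krullLE A k M ↔ DeviationLT k (⊥ : Submodule A M) ⊤ := by
  induction k generalizing M with
  | zero =>
    simp only [krullLE, DeviationLT, bot_lt_iff_ne_bot, not_not]
    rw [← Submodule.subsingleton_iff A, ← subsingleton_iff_bot_eq_top, eq_comm]
  | succ k ih =>
    simp only [krullLE, DeviationLT, ih, Set.mem_Icc, bot_le, le_top, and_self, implies_true,
      forall_const]
    exact forall₂_congr fun f hf => eventually_congr <| .of_forall fun i =>
      deviationLT_quotient_iff (hf i.le_succ)

open scoped Polynomial

section LeadingCoefficients

open Set

variable {S M ι : Type*} [CommRing S] [AddCommGroup M] [Module S M] [LinearOrder ι]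
  {b : ι → M} {N : Submodule S M}

/-- The ideal of leading coefficients in degree `q` of the elements of `N`, with respect to a
family `b` indexed by a linear order: the `r` such that `r • b q` lies in `N` up to a combination
of the `b p` with `p < q`. The family need not be linearly independent. -/
def leadingCoeffIdeal (b : ι → M) (N : Submodule S M) (q : ι) : Ideal S :=
  (N ⊔ Submodule.span S (b '' Iio q)).comap (LinearMap.toSpanSingleton S M (b q))

theorem mem_leadingCoeffIdeal {q : ι} {r : S} :
    r ∈ leadingCoeffIdeal b N q ↔ r • b q ∈ N ⊔ Submodule.span S (b '' Iio q) :=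
  Iff.rfl

theorem monotone_leadingCoeffIdeal : Monotone (leadingCoeffIdeal (S := S) b) :=
  fun _ _ h _ => Submodule.comap_mono (sup_le_sup_right h _)

theorem eq_zero_or_mem_span_image_Iic_of_mem_span {s : Set ι} {x : M}
    (hx : x ∈ Submodule.span S (b '' s)) : x = 0 ∨ ∃ q ∈ s, x ∈ Submodule.span S (b '' Iic q) := by
  have span_Iic_mono : Monotone fun q => Submodule.span S (b '' Iic q) :=
    fun _ _ h => Submodule.span_mono (image_mono (Iic_subset_Iic.2 h))
  induction hx using Submodule.span_induction with
  | mem x hx =>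
    obtain ⟨q, hq, rfl⟩ := hx
    exact .inr ⟨q, hq, Submodule.subset_span (mem_image_of_mem b self_mem_Iic)⟩
  | zero => exact .inl rfl
  | add x y _ _ hx hy =>
    rcases hx with rfl | ⟨p, hp, hxp⟩
    · rwa [zero_add]
    rcases hy with rfl | ⟨q, hq, hyq⟩
    · exact .inr ⟨p, hp, by rwa [add_zero]⟩
    · exact .inr ⟨max p q, max_rec' (· ∈ s) hp hq,
        add_mem (span_Iic_mono (le_max_left p q) hxp) (span_Iic_mono (le_max_right p q) hyq)⟩
  | smul r x _ hx =>
    rcases hx with rfl | ⟨q, hq, hxq⟩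
    · exact .inl (smul_zero r)
    · exact .inr ⟨q, hq, Submodule.smul_mem _ r hxq⟩

theorem exists_mem_sub_mem_span_image_Iio {N' : Submodule S M} {q : ι} {x : M} (hx : x ∈ N')
    (hxq : x ∈ Submodule.span S (b '' Iic q))
    (hlead : leadingCoeffIdeal b N' q ≤ leadingCoeffIdeal b N q) :
    ∃ y ∈ N, x - y ∈ Submodule.span S (b '' Iio q) := by
  rw [← Iio_insert, image_insert_eq] at hxq
  obtain ⟨r, z, hz, rfl⟩ := Submodule.mem_span_insert.1 hxq
  have hr : r ∈ leadingCoeffIdeal b N' q := mem_leadingCoeffIdeal.2 <|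
    Submodule.mem_sup.2 ⟨_, hx, -z, neg_mem hz, add_neg_cancel_right _ _⟩
  obtain ⟨y, hy, z', hz', hyz'⟩ := Submodule.mem_sup.1 (mem_leadingCoeffIdeal.1 (hlead hr))
  exact ⟨y, hy, by simpa only [← hyz', add_assoc, add_sub_cancel_left] using add_mem hz' hz⟩

theorem strictMono_leadingCoeffIdeal [WellFoundedLT ι] (hb : Submodule.span S (range b) = ⊤) :
    StrictMono (leadingCoeffIdeal (S := S) b) := by
  refine fun N N' hlt => lt_of_le_not_ge (monotone_leadingCoeffIdeal hlt.le) fun hle =>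
    hlt.not_ge fun x hx => ?_
  have mem_of_mem_span_Iic (q : ι) :
      ∀ x ∈ N', x ∈ Submodule.span S (b '' Iic q) → x ∈ N := by
    induction q using WellFoundedLT.induction with
    | ind q ih =>
      intro x hx hxq
      obtain ⟨y, hy, hxy⟩ := exists_mem_sub_mem_span_image_Iio hx hxq (hle q)
      refine (N.sub_mem_iff_left hy).1 ?_
      rcases eq_zero_or_mem_span_image_Iic_of_mem_span hxy with h0 | ⟨p, hp, hxyp⟩
      · exact h0 ▸ N.zero_mem
      · exact ih p hp _ (sub_mem hx (hlt.le hy)) hxyp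
  have hx_span : x ∈ Submodule.span S (b '' univ) := image_univ (f := b) ▸ hb ▸ Submodule.mem_top
  rcases eq_zero_or_mem_span_image_Iic_of_mem_span hx_span with rfl | ⟨q, -, hxq⟩
  · exact N.zero_mem
  · exact mem_of_mem_span_Iic q x hx hxq

/-- `HasLeadingTerm b q c x` says that `x` is `c • b q` plus a combination of the `b p` with
`p < q`. -/
def HasLeadingTerm (b : ι → M) (q : ι) (c : S) (x : M) : Prop :=
  x - c • b q ∈ Submodule.span S (b '' Iio q)

theorem HasLeadingTerm.mem_span_image_Iic {q : ι} {c : S} {x : M} (h : HasLeadingTerm b q c x) :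
    x ∈ Submodule.span S (b '' Iic q) :=
  (Submodule.sub_mem_iff_left _ (Submodule.smul_mem _ c
    (Submodule.subset_span (mem_image_of_mem b self_mem_Iic)))).1
    (Submodule.span_mono (image_mono Iio_subset_Iic_self) h)

theorem leadingCoeffIdeal_le_of_hasLeadingTerm (g : M →ₗ[S] M) (hgN : ∀ x ∈ N, g x ∈ N)
    {e : ι → ι} (he : StrictMono e)
    (hg : ∀ q, ∃ c : S, IsUnit c ∧ HasLeadingTerm b (e q) c (g (b q)))
    (q : ι) : leadingCoeffIdeal b N q ≤ leadingCoeffIdeal b N (e q) := by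
  intro r hr
  obtain ⟨c, hc, hcq⟩ := hg q
  have map_span_le : (Submodule.span S (b '' Iio q)).map g ≤ Submodule.span S (b '' Iio (e q)) := by
    rw [Submodule.map_span_le]
    rintro _ ⟨p, hp, rfl⟩
    obtain ⟨c', -, hc'⟩ := hg p
    exact Submodule.span_mono (image_mono (Iic_subset_Iio.2 (he hp))) hc'.mem_span_image_Iic
  have hgr : r • g (b q) ∈ N ⊔ Submodule.span S (b '' Iio (e q)) := by
    rw [← map_smul]
    refine sup_le_sup (Submodule.map_le_iff_le_comap.2 hgN) map_span_le ?_
    rw [← Submodule.map_sup]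
    exact Submodule.mem_map_of_mem hr
  have hcr : c * r ∈ leadingCoeffIdeal b N (e q) := by
    rw [mem_leadingCoeffIdeal, mul_comm, mul_smul, ← sub_sub_self (g (b q)) (c • b (e q)), smul_sub]
    exact sub_mem hgr (Submodule.smul_mem _ r (Submodule.mem_sup_right hcq))
  exact (Ideal.unit_mul_mem_iff_mem _ hc).1 hcr

theorem leadingCoeffIdeal_restrictScalars_le {A : Type*} [Ring A] [Algebra S A] {b : ι → A}
    (I : Ideal A) (a : A) {e : ι → ι} (he : StrictMono e)
    (ha : ∀ q, ∃ c : S, IsUnit c ∧ HasLeadingTerm b (e q) c (a * b q)) (q : ι) :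
    leadingCoeffIdeal b (I.restrictScalars S) q ≤ leadingCoeffIdeal b (I.restrictScalars S) (e q) :=
  leadingCoeffIdeal_le_of_hasLeadingTerm (LinearMap.mulLeft S a)
    (fun _ hx => I.mul_mem_left a hx) he ha q

end LeadingCoefficients

namespace DeviationLT

variable {k n : ℕ}

theorem of_wellFoundedLT {P : Type*} [PartialOrder P] [WellFoundedLT P] {a b : P} :
    DeviationLT 1 a b := by
  intro f hf _
  obtain ⟨N, hN⟩ := WellFoundedGT.monotone_chain_condition ⟨OrderDual.toDual ∘ f, hf.dual_right⟩
  filter_upwards [eventually_ge_atTop N] with i hi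
  have h₁ : f N = f i := hN i hi
  have h₂ : f N = f (i + 1) := hN (i + 1) (hi.trans i.le_succ)
  exact (h₂.symm.trans h₁).not_lt

theorem ideal_of_ringEquiv {R S : Type*} [Semiring R] [Semiring S] (e : R ≃+* S)
    (h : DeviationLT k (⊥ : Ideal S) ⊤) : DeviationLT k (⊥ : Ideal R) ⊤ :=
  of_strictMonoOn (e.symm.idealComapOrderIso.strictMono.strictMonoOn _) bot_le le_top h

theorem ideal_polynomial {S : Type*} [CommRing S] [IsNoetherianRing S]
    (h : DeviationLT k (⊥ : Ideal S) ⊤) : DeviationLT (k + 1) (⊥ : Ideal S[X]) ⊤ := by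
  let b (n : ℕ) : S[X] := Polynomial.monomial n 1
  have hb : Submodule.span S (Set.range b) = ⊤ := by
    simpa only [Polynomial.coe_basisMonomials] using (Polynomial.basisMonomials S).span_eq
  let lead (I : Ideal S[X]) : ℕ →o Ideal S :=
    ⟨leadingCoeffIdeal b (I.restrictScalars S), monotone_nat_of_le_succ <|
      leadingCoeffIdeal_restrictScalars_le I Polynomial.X (add_left_strictMono (a := 1))
        fun n => ⟨1, isUnit_one, by simp [HasLeadingTerm, b, Polynomial.X_mul_monomial]⟩⟩
  have lead_strictMono : StrictMono lead :=
    fun _ _ hIJ => strictMono_leadingCoeffIdeal hb ((Submodule.restrictScalars_lt S).2 hIJ)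
  exact of_strictMono lead_strictMono (orderHom fun _ => mono bot_le le_top h)

theorem ideal_mvPolynomial {K : Type*} [Field K] :
    DeviationLT (n + 1) (⊥ : Ideal (MvPolynomial (Fin n) K)) ⊤ := by
  induction n with
  | zero => exact ideal_of_ringEquiv (isEmptyRingEquiv K (Fin 0)) of_wellFoundedLT
  | succ n ih => exact ideal_of_ringEquiv (finSuccEquiv K n).toRingEquiv (ideal_polynomial ih)

end DeviationLT

theorem smul_mem_of_adjoin_eq_top {S A N : Type*} [CommSemiring S] [Semiring A] [Algebra S A]
    [AddCommMonoid N] [Module S N] [Module A N] [IsScalarTower S A N] {s : Set A}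
    (hs : Algebra.adjoin S s = ⊤) {P : Submodule S N} (hP : ∀ a ∈ s, ∀ x ∈ P, a • x ∈ P)
    (a : A) {x : N} (hx : x ∈ P) : a • x ∈ P := by
  have ha : a ∈ Algebra.adjoin S s := hs ▸ Algebra.mem_top
  induction ha using Algebra.adjoin_induction generalizing x with
  | mem a ha => exact hP a ha x hx
  | algebraMap r => exact algebraMap_smul A r x ▸ P.smul_mem r hx
  | add a a' _ _ iha iha' => exact add_smul a a' x ▸ add_mem (iha hx) (iha' hx)
  | mul a a' _ _ iha iha' => exact mul_smul a a' x ▸ iha (iha' hx)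

theorem semiconjBy_aeval {S A : Type*} [CommSemiring S] [Semiring A] [Algebra S A] {g x y : A}
    (h : SemiconjBy g x y) (p : S[X]) :
    SemiconjBy g (Polynomial.aeval x p) (Polynomial.aeval y p) := by
  induction p using Polynomial.induction_on' with
  | add p q hp hq => simpa only [map_add] using hp.add_right hq
  | monomial k r =>
    simpa only [Polynomial.aeval_monomial] using
      SemiconjBy.mul_right (Algebra.commute_algebraMap_right r g) (h.pow_right k)

section PBW

variable {S A : Type*} [CommRing S] [Ring A] [Algebra S A] {u w d : A}

/-- The ordered monomials `uⁱ wᵏ dʲ`, indexed by `(i, j, k)` in lexicographic order. -/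
def pbwMonomial (u w d : A) (q : ℕ ×ₗ ℕ ×ₗ ℕ) : A :=
  u ^ (ofLex q).1 * w ^ (ofLex (ofLex q).2).2 * d ^ (ofLex (ofLex q).2).1

theorem hasLeadingTerm_pbwMonomial_aeval (i j : ℕ) {k : ℕ} {p : S[X]} (hp : p.natDegree ≤ k) :
    HasLeadingTerm (pbwMonomial u w d) (toLex (i, toLex (j, k))) (p.coeff k)
      (u ^ i * Polynomial.aeval w p * d ^ j) := by
  have hlead : u ^ i * (p.coeff k • w ^ k) * d ^ j =
      p.coeff k • pbwMonomial u w d (toLex (i, toLex (j, k))) := by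
    simp only [pbwMonomial, ofLex_toLex, mul_smul_comm, smul_mul_assoc]
  rw [HasLeadingTerm, Polynomial.aeval_eq_sum_range' (Nat.lt_succ_of_le hp),
    Finset.sum_range_succ, mul_add, add_mul, hlead, add_sub_cancel_right, Finset.mul_sum,
    Finset.sum_mul]
  refine sum_mem fun l hl => ?_
  rw [mul_smul_comm, smul_mul_assoc]
  refine Submodule.smul_mem _ _ (Submodule.subset_span ⟨toLex (i, toLex (j, l)), ?_, rfl⟩)
  simpa [Prod.Lex.toLex_lt_toLex] using hl

theorem aeval_mem_span_pbwMonomial_Iio {i i' : ℕ} (hi : i < i') (j j' k : ℕ) (p : S[X]) :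
    u ^ i * Polynomial.aeval w p * d ^ j ∈
      Submodule.span S (pbwMonomial u w d '' Set.Iio (toLex (i', toLex (j', k)))) :=
  Submodule.span_mono
    (Set.image_mono (Set.Iic_subset_Iio.2 (Prod.Lex.toLex_lt_toLex.2 (.inl hi))))
    (hasLeadingTerm_pbwMonomial_aeval i j (le_refl p.natDegree)).mem_span_image_Iic

end PBW

/-- The presentation of a down-up algebra with parameters `α = lam + mu` and `β = -(lam * mu)`
through the element `w = d * u - mu • (u * d)`, which skew-commutes with `u` and `d`. -/
structure IsDownUpTriple {S A : Type*} [CommRing S] [Ring A] [Algebra S A] (lam mu φ : S)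
    (u w d : A) : Prop where
  adjoin_eq_top : Algebra.adjoin S {u, d} = ⊤
  d_mul_u : d * u = mu • (u * d) + w
  d_mul_w : d * w = lam • (w * d) + φ • d
  w_mul_u : w * u = lam • (u * w) + φ • u

namespace IsDownUpTriple

variable {S A : Type*} [CommRing S] [Ring A] [Algebra S A] {lam mu φ : S} {u w d : A}

theorem semiconjBy_d (h : IsDownUpTriple lam mu φ u w d) :
    SemiconjBy d w (lam • w + algebraMap S A φ) := by
  rw [SemiconjBy, h.d_mul_w, add_mul, smul_mul_assoc, Algebra.smul_def φ d]

theorem semiconjBy_u (h : IsDownUpTriple lam mu φ u w d) :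
    SemiconjBy u (lam • w + algebraMap S A φ) w := by
  rw [SemiconjBy, h.w_mul_u, mul_add, mul_smul_comm, ← Algebra.commutes, ← Algebra.smul_def]

theorem aeval_mul_u (h : IsDownUpTriple lam mu φ u w d) (p : S[X]) :
    Polynomial.aeval w p * u = u * Polynomial.aeval w
      (p.comp (Polynomial.C lam * Polynomial.X + Polynomial.C φ)) := by
  have hw : Polynomial.aeval w (Polynomial.C lam * Polynomial.X + Polynomial.C φ) =
      lam • w + algebraMap S A φ := by simp [Algebra.smul_def]
  rw [Polynomial.aeval_comp, hw]
  exact (semiconjBy_aeval h.semiconjBy_u p).eq.symm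

theorem w_mul_u_pow (h : IsDownUpTriple lam mu φ u w d) (i : ℕ) :
    ∃ c : S, w * u ^ i = u ^ i * Polynomial.aeval w
      (Polynomial.C (lam ^ i) * Polynomial.X + Polynomial.C c) := by
  induction i with
  | zero => exact ⟨0, by simp⟩
  | succ i ih =>
    obtain ⟨c, hc⟩ := ih
    refine ⟨lam ^ i * φ + c, ?_⟩
    rw [pow_succ u, ← mul_assoc, hc, mul_assoc, h.aeval_mul_u, ← mul_assoc]
    congr 2
    rw [Polynomial.add_comp, Polynomial.mul_comp, Polynomial.C_comp, Polynomial.C_comp,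
      Polynomial.X_comp, pow_succ, map_mul, map_add, map_mul]
    ring

theorem d_mul_u_pow_succ (h : IsDownUpTriple lam mu φ u w d) (i : ℕ) :
    ∃ p : S[X],
      d * u ^ (i + 1) = mu ^ (i + 1) • (u ^ (i + 1) * d) + u ^ i * Polynomial.aeval w p := by
  induction i with
  | zero => exact ⟨Polynomial.X, by simpa using h.d_mul_u⟩
  | succ i ih =>
    obtain ⟨p, hp⟩ := ih
    refine ⟨Polynomial.C (mu ^ (i + 1)) * Polynomial.X +
      p.comp (Polynomial.C lam * Polynomial.X + Polynomial.C φ), ?_⟩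
    calc d * u ^ (i + 1 + 1) = mu ^ (i + 1) • (u ^ (i + 1) * (d * u)) +
          u ^ i * (Polynomial.aeval w p * u) := by
          rw [pow_succ u (i + 1), ← mul_assoc, hp, add_mul, smul_mul_assoc, mul_assoc, mul_assoc]
      _ = _ := by
          rw [h.d_mul_u, h.aeval_mul_u, map_add, map_mul, Polynomial.aeval_C, Polynomial.aeval_X,
            ← Algebra.smul_def, ← mul_assoc (u ^ i), ← pow_succ, mul_add (u ^ (i + 1)),
            mul_add (u ^ (i + 1)), mul_smul_comm, mul_smul_comm, smul_add, smul_smul, ← pow_succ,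
            ← mul_assoc, ← pow_succ, add_assoc]

theorem u_mul_pbwMonomial (i j k : ℕ) :
    HasLeadingTerm (pbwMonomial u w d) (toLex (i + 1, toLex (j, k))) (1 : S)
      (u * pbwMonomial u w d (toLex (i, toLex (j, k)))) := by
  simp [HasLeadingTerm, pbwMonomial, pow_succ', mul_assoc]

theorem w_mul_pbwMonomial (h : IsDownUpTriple lam mu φ u w d) (i j k : ℕ) :
    HasLeadingTerm (pbwMonomial u w d) (toLex (i, toLex (j, k + 1))) (lam ^ i)
      (w * pbwMonomial u w d (toLex (i, toLex (j, k)))) := by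
  obtain ⟨c, hc⟩ := h.w_mul_u_pow i
  set p := (Polynomial.C (lam ^ i) * Polynomial.X + Polynomial.C c) * Polynomial.X ^ k with hp
  have hdeg : p.natDegree ≤ k + 1 := by
    rw [hp, add_comm k]
    compute_degree
  have hcoeff : p.coeff (k + 1) = lam ^ i := by
    rw [hp, add_comm k, Polynomial.coeff_mul_X_pow]
    simp [-map_pow]
  have hmul : w * pbwMonomial u w d (toLex (i, toLex (j, k))) =
      u ^ i * Polynomial.aeval w p * d ^ j := by
    simp only [hp, pbwMonomial, ofLex_toLex, map_mul (Polynomial.aeval w),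
      Polynomial.aeval_X_pow, ← mul_assoc, ← hc]
  rw [hmul, ← hcoeff]
  exact hasLeadingTerm_pbwMonomial_aeval i j hdeg

theorem u_pow_mul_d_mul_w_pow (h : IsDownUpTriple lam mu φ u w d) (i j k : ℕ) :
    HasLeadingTerm (pbwMonomial u w d) (toLex (i, toLex (j + 1, k))) (lam ^ k)
      (u ^ i * d * w ^ k * d ^ j) := by
  set p := (Polynomial.C lam * Polynomial.X + Polynomial.C φ) ^ k with hp
  have hlin : (Polynomial.C lam * Polynomial.X + Polynomial.C φ).natDegree ≤ 1 := by
    compute_degree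
  have hdeg : p.natDegree ≤ k := by
    simpa using Polynomial.natDegree_pow_le_of_le k hlin
  have hcoeff : p.coeff k = lam ^ k := by
    simpa using Polynomial.coeff_pow_of_natDegree_le (m := k) hlin
  have hmul : u ^ i * d * w ^ k * d ^ j = u ^ i * Polynomial.aeval w p * d ^ (j + 1) := by
    have hd : d * w ^ k = Polynomial.aeval w p * d := by
      simpa [hp, Algebra.smul_def] using (h.semiconjBy_d.pow_right k).eq
    rw [mul_assoc (u ^ i), hd, pow_succ' d, mul_assoc, mul_assoc, mul_assoc]
  rw [hmul, ← hcoeff]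
  exact hasLeadingTerm_pbwMonomial_aeval i (j + 1) hdeg

theorem d_mul_pbwMonomial (h : IsDownUpTriple lam mu φ u w d) (i j k : ℕ) :
    HasLeadingTerm (pbwMonomial u w d) (toLex (i, toLex (j + 1, k))) (mu ^ i * lam ^ k)
      (d * pbwMonomial u w d (toLex (i, toLex (j, k)))) := by
  have hlead := h.u_pow_mul_d_mul_w_pow i j k
  cases i with
  | zero => simpa [pbwMonomial, ← mul_assoc] using hlead
  | succ i =>
    obtain ⟨p, hp⟩ := h.d_mul_u_pow_succ i
    have hmul : d * pbwMonomial u w d (toLex (i + 1, toLex (j, k))) =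
        mu ^ (i + 1) • (u ^ (i + 1) * d * w ^ k * d ^ j) +
          u ^ i * Polynomial.aeval w (p * Polynomial.X ^ k) * d ^ j := by
      simp only [pbwMonomial, ofLex_toLex, ← mul_assoc, hp, add_mul, smul_mul_assoc, map_mul,
        map_pow, Polynomial.aeval_X]
    rw [HasLeadingTerm, hmul, mul_smul, add_sub_right_comm, ← smul_sub]
    exact add_mem (Submodule.smul_mem _ _ hlead)
      (aeval_mem_span_pbwMonomial_Iio i.lt_succ_self j (j + 1) k _)

theorem span_pbwMonomial (h : IsDownUpTriple lam mu φ u w d) :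
    Submodule.span S (Set.range (pbwMonomial u w d)) = ⊤ := by
  set P := Submodule.span S (Set.range (pbwMonomial u w d)) with hP
  have mem_of_hasLeadingTerm {q : ℕ ×ₗ ℕ ×ₗ ℕ} {c : S} {x : A}
      (hx : HasLeadingTerm (pbwMonomial u w d) q c x) : x ∈ P :=
    Submodule.span_mono (Set.image_subset_range _ _) hx.mem_span_image_Iic
  have hmul : ∀ a ∈ ({u, d} : Set A), ∀ x ∈ P, a • x ∈ P := by
    intro a ha x hx
    suffices hle : P ≤ P.comap (LinearMap.mulLeft S a) from hle hx
    refine Submodule.span_le.2 ?_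
    rintro _ ⟨⟨i, j, k⟩, rfl⟩
    rcases ha with rfl | rfl
    · exact mem_of_hasLeadingTerm (u_mul_pbwMonomial i j k)
    · exact mem_of_hasLeadingTerm (h.d_mul_pbwMonomial i j k)
  have hone : (1 : A) ∈ P := Submodule.subset_span ⟨toLex (0, toLex (0, 0)), by simp [pbwMonomial]⟩
  refine eq_top_iff.2 fun a _ => ?_
  simpa using smul_mem_of_adjoin_eq_top h.adjoin_eq_top hmul a hone

theorem deviationLT_ideal [IsNoetherianRing S] (h : IsDownUpTriple lam mu φ u w d)
    (hlam : IsUnit lam) (hmu : IsUnit mu) {k : ℕ} (hS : DeviationLT k (⊥ : Ideal S) ⊤) :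
    DeviationLT (k + 3) (⊥ : Ideal A) ⊤ := by
  let lead (I : Ideal A) : ℕ ×ₗ ℕ ×ₗ ℕ → Ideal S :=
    leadingCoeffIdeal (pbwMonomial u w d) (I.restrictScalars S)
  have lead_le_u (I : Ideal A) (q : ℕ ×ₗ ℕ ×ₗ ℕ) : lead I q ≤ lead I (q + toLex (1, 0)) :=
    leadingCoeffIdeal_restrictScalars_le I u add_left_strictMono
      (fun ⟨i, j, k⟩ => ⟨1, isUnit_one, u_mul_pbwMonomial i j k⟩) q
  have lead_le_d (I : Ideal A) (q : ℕ ×ₗ ℕ ×ₗ ℕ) :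
      lead I q ≤ lead I (q + toLex (0, toLex (1, 0))) :=
    leadingCoeffIdeal_restrictScalars_le I d add_left_strictMono
      (fun ⟨i, j, k⟩ => ⟨_, (hmu.pow i).mul (hlam.pow k), h.d_mul_pbwMonomial i j k⟩) q
  have lead_le_w (I : Ideal A) (q : ℕ ×ₗ ℕ ×ₗ ℕ) :
      lead I q ≤ lead I (q + toLex (0, toLex (0, 1))) :=
    leadingCoeffIdeal_restrictScalars_le I w add_left_strictMono
      (fun ⟨i, j, k⟩ => ⟨_, hlam.pow i, h.w_mul_pbwMonomial i j k⟩) q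
  let curriedLead (I : Ideal A) : ℕ →o ℕ →o ℕ →o Ideal S :=
    ⟨fun i => ⟨fun j => ⟨fun k => lead I (toLex (i, toLex (j, k))),
          monotone_nat_of_le_succ fun _ => lead_le_w I _⟩,
        monotone_nat_of_le_succ fun _ _ => lead_le_d I _⟩,
      monotone_nat_of_le_succ fun _ _ _ => lead_le_u I _⟩
  have lead_strictMono : StrictMono lead := fun _ _ hIJ =>
    strictMono_leadingCoeffIdeal h.span_pbwMonomial ((Submodule.restrictScalars_lt S).2 hIJ)
  have curriedLead_strictMono : StrictMono curriedLead := fun _ _ hIJ =>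
    lt_of_le_not_ge (fun _ _ _ => (lead_strictMono hIJ).le _) fun hle =>
      (lead_strictMono hIJ).not_ge fun ⟨i, j, k⟩ => hle i j k
  have : WellFoundedGT (ℕ →o Ideal S) := wellFoundedGT_orderHom
  have : WellFoundedGT (ℕ →o ℕ →o Ideal S) := wellFoundedGT_orderHom
  exact .of_strictMono curriedLead_strictMono <|
    .orderHom fun _ => .orderHom fun _ => .orderHom fun _ => .mono bot_le le_top hS

end IsDownUpTriple

section Chains

variable {A M N : Type*} [Ring A] [AddCommGroup M] [Module A M] [AddCommGroup N] [Module A N]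
  {k : ℕ}

theorem DeviationLT.of_surjective {f : M →ₗ[A] N} (hf : Function.Surjective f)
    (h : DeviationLT k (⊥ : Submodule A M) ⊤) : DeviationLT k (⊥ : Submodule A N) ⊤ :=
  .of_strictMono (Submodule.comap_strictMono_of_surjective hf) (.mono bot_le le_top h)

variable {J J' B : Submodule A N}

theorem strictMonoOn_sup_map {f : Module.End A N} (hJ : J ≤ J') (hf : B ⊓ J.comap f ≤ J) :
    StrictMonoOn (fun X => J ⊔ X.map f) (Set.Icc J' B) := by
  intro X hX Y hY hlt
  refine lt_of_le_not_ge (sup_le_sup_left (Submodule.map_mono hlt.le) J) fun hle =>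
    hlt.not_ge fun y hy => ?_
  obtain ⟨a, ha, _, ⟨x, hx, rfl⟩, hax⟩ := Submodule.mem_sup.1
    (hle (Submodule.mem_sup_right (Submodule.mem_map_of_mem hy)))
  have hfyx : f (y - x) ∈ J := by
    rwa [map_sub, ← hax, add_sub_cancel_right]
  exact (X.sub_mem_iff_left hx).1
    (hX.1 (hJ (hf ⟨B.sub_mem (hY.2 hy) (hY.2 (hlt.le hx)), hfyx⟩)))

theorem inf_comap_pow_le {f : Module.End A N} (hB : B ≤ B.comap f) (hf : B ⊓ J.comap f ≤ J)
    (i : ℕ) : B ⊓ J.comap (f ^ i) ≤ J := by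
  induction i with
  | zero => exact inf_le_right
  | succ i ih =>
    rintro x ⟨hxB, hxJ⟩
    rw [pow_succ, Module.End.mul_eq_comp, Submodule.comap_comp] at hxJ
    exact hf ⟨hxB, ih ⟨hB hxB, hxJ⟩⟩

/-- The chain `J ⊔ fⁱ B` has every factor above a copy of the interval `[J', B]`. -/
theorem not_deviationLT_succ_of_end {f : Module.End A N} (hJ : J ≤ J') (hB : J' ≤ B)
    (hf : B ≤ J'.comap f) (hf_inj : B ⊓ J.comap f ≤ J) (h : ¬ DeviationLT k J' B) :
    ¬ DeviationLT (k + 1) J B := by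
  have hBf : B ≤ B.comap f := hf.trans (Submodule.comap_mono hB)
  have hstep (i : ℕ) : B.map (f ^ (i + 1)) ≤ J'.map (f ^ i) := by
    rw [pow_succ, Module.End.mul_eq_comp, Submodule.map_comp]
    exact Submodule.map_mono (Submodule.map_le_iff_le_comap.2 hf)
  intro hd
  obtain ⟨i, hi⟩ := (hd (fun i => J ⊔ B.map (f ^ i))
    (antitone_nat_of_succ_le fun i => sup_le_sup_left
      ((hstep i).trans (Submodule.map_mono hB)) J)
    fun i => ⟨le_sup_left, sup_le (hJ.trans hB)
      (Submodule.map_le_iff_le_comap.2 (B.le_comap_pow_of_le_comap hBf i))⟩).exists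
  exact h (.of_strictMonoOn (strictMonoOn_sup_map hJ (inf_comap_pow_le hBf hf_inj i))
    (sup_le_sup_left (hstep i) J) le_rfl hi)

end Chains

section LadderOperators

variable {R : Type*} [CommRing R] (mu : R) (w : ℤ → R)

/-- The structure constants in `d uⁱ dʲ = muⁱ uⁱ dʲ⁺¹ + lowerCoeff mu w i j uⁱ⁻¹ dʲ`, where
`w (i - j)` is the weight of `uⁱ dʲ`. -/
def lowerCoeff : ℕ → ℕ → R
  | 0, _ => 0
  | i + 1, j => mu * lowerCoeff i j + w (i - j)

theorem lowerCoeff_succ (i j : ℕ) :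
    lowerCoeff mu w (i + 1) j = mu * lowerCoeff mu w i j + w (i - j) :=
  rfl

/-- The action of `u` on the free module whose basis vector `(i, j)` stands for `uⁱ dʲ`. -/
noncomputable def raising (R : Type*) [CommRing R] : Module.End R (ℕ × ℕ →₀ R) :=
  Finsupp.linearCombination R fun q => Finsupp.single (q.1 + 1, q.2) 1

/-- The action of `d` on the free module whose basis vector `(i, j)` stands for `uⁱ dʲ`. The
truncated `i - 1` is harmless, since `lowerCoeff` vanishes at `i = 0`. -/
noncomputable def lowering : Module.End R (ℕ × ℕ →₀ R) :=
  Finsupp.linearCombination R fun q =>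
    Finsupp.single (q.1, q.2 + 1) (mu ^ q.1) +
      Finsupp.single (q.1 - 1, q.2) (lowerCoeff mu w q.1 q.2)

/-- The action of `w = d u - mu u d` on the free module whose basis vector `(i, j)` stands for
`uⁱ dʲ`. -/
noncomputable def weight : Module.End R (ℕ × ℕ →₀ R) :=
  Finsupp.linearCombination R fun q => Finsupp.single q (w (q.1 - q.2))

theorem raising_single (i j : ℕ) (r : R) :
    raising R (Finsupp.single (i, j) r) = Finsupp.single (i + 1, j) r := by
  simp [raising]

theorem lowering_single_zero (j : ℕ) (r : R) :
    lowering mu w (Finsupp.single (0, j) r) = Finsupp.single (0, j + 1) r := by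
  simp [lowering, lowerCoeff]

theorem lowering_single_succ (i j : ℕ) (r : R) :
    lowering mu w (Finsupp.single (i + 1, j) r) =
      Finsupp.single (i + 1, j + 1) (mu ^ (i + 1) * r) +
        Finsupp.single (i, j) (lowerCoeff mu w (i + 1) j * r) := by
  simp [lowering, mul_comm r]

theorem weight_single (i j : ℕ) (r : R) :
    weight w (Finsupp.single (i, j) r) = Finsupp.single (i, j) (w (i - j) * r) := by
  simp [weight, mul_comm r]

theorem lowering_mul_raising :
    lowering mu w * raising R = mu • (raising R * lowering mu w) + weight w := by
  refine Finsupp.lhom_ext fun ⟨i, j⟩ r => ?_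
  simp only [Module.End.mul_apply, LinearMap.add_apply, LinearMap.smul_apply, raising_single,
    lowering_single_succ, weight_single, lowerCoeff_succ]
  cases i with
  | zero => simp [lowering_single_zero, raising_single, lowerCoeff]
  | succ i =>
    simp only [lowering_single_succ, map_add, smul_add, raising_single, Finsupp.smul_single,
      smul_eq_mul, add_assoc, ← Finsupp.single_add]
    congr 2 <;> ring

variable {lam φ : R} {w}

theorem lowering_mul_weight (hw : ∀ m, w (m + 1) = lam * w m + φ) :
    lowering mu w * weight w = lam • (weight w * lowering mu w) + φ • lowering mu w := by
  refine Finsupp.lhom_ext fun ⟨i, j⟩ r => ?_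
  have hrow : w (i - j) = lam * w (i - (j + 1 : ℕ)) + φ := by
    rw [← hw]; congr 1; push_cast; ring
  cases i with
  | zero =>
    simp only [Module.End.mul_apply, LinearMap.add_apply, LinearMap.smul_apply, weight_single,
      lowering_single_zero, Finsupp.smul_single, smul_eq_mul, hrow, ← Finsupp.single_add]
    congr 1; ring
  | succ i =>
    have hcol : w ((i + 1 : ℕ) - j) = lam * w (i - j) + φ := by
      rw [← hw]; congr 1; push_cast; ring
    simp only [Module.End.mul_apply, LinearMap.add_apply, LinearMap.smul_apply, weight_single,
      lowering_single_succ, map_add, smul_add, Finsupp.smul_single, smul_eq_mul]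
    rw [add_add_add_comm, ← Finsupp.single_add, ← Finsupp.single_add]
    congr 2
    · rw [hrow]; ring
    · rw [hcol]; ring

theorem weight_mul_raising (hw : ∀ m, w (m + 1) = lam * w m + φ) :
    weight w * raising R = lam • (raising R * weight w) + φ • raising R := by
  refine Finsupp.lhom_ext fun ⟨i, j⟩ r => ?_
  have hcol : w ((i + 1 : ℕ) - j) = lam * w (i - j) + φ := by
    rw [← hw]; congr 1; push_cast; ring
  simp only [Module.End.mul_apply, LinearMap.add_apply, LinearMap.smul_apply, raising_single,
    weight_single, Finsupp.smul_single, smul_eq_mul, hcol, ← Finsupp.single_add]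
  congr 1; ring

theorem exists_weights (hlam : IsUnit lam) (φ x : R) :
    ∃ w : ℤ → R, w 0 = x ∧ ∀ m, w (m + 1) = lam * w m + φ := by
  let affine : Equiv.Perm R := hlam.unit.mulLeft.trans (Equiv.addRight φ)
  refine ⟨fun m => (affine ^ m) x, rfl, fun m => ?_⟩
  change (affine ^ (m + 1)) x = affine ((affine ^ m) x)
  rw [add_comm, zpow_one_add, Equiv.Perm.mul_apply]

theorem weight_mem (hlam : IsUnit lam) (hw : ∀ m, w (m + 1) = lam * w m + φ) {Q : Ideal R}
    (h0 : w 0 ∈ Q) (hφ : φ ∈ Q) (m : ℤ) : w m ∈ Q := by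
  have hsucc (m : ℤ) : w (m + 1) ∈ Q ↔ w m ∈ Q := by
    rw [hw, Q.add_mem_iff_left hφ, Q.unit_mul_mem_iff_mem hlam]
  induction m using Int.induction_on with
  | zero => exact h0
  | succ m ih => exact (hsucc _).2 ih
  | pred m ih => exact (hsucc _).1 (by rwa [sub_add_cancel])

theorem lowerCoeff_mem {Q : Ideal R} (hw : ∀ m, w m ∈ Q) (i j : ℕ) : lowerCoeff mu w i j ∈ Q := by
  induction i with
  | zero => exact Q.zero_mem
  | succ i ih => exact Q.add_mem (Q.mul_mem_left _ ih) (hw _)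

end LadderOperators

section RowIdeals

variable {R : Type*} [CommRing R]

/-- The family of ideals of `R` indexed by the basis `uⁱ dˡ` that vanishes in the rows `l < j`,
is `Q` in row `j` and is everything in the rows `l > j`. -/
def rowIdeals (j : ℕ) (Q : ℕ → Ideal R) (q : ℕ × ℕ) : Ideal R :=
  if q.2 < j then ⊥ else if q.2 = j then Q q.1 else ⊤

variable {j : ℕ} {Q : ℕ → Ideal R}

theorem rowIdeals_of_lt {i j' : ℕ} (h : j' < j) : rowIdeals j Q (i, j') = ⊥ := if_pos h

theorem rowIdeals_self (i : ℕ) : rowIdeals j Q (i, j) = Q i := by simp [rowIdeals]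

theorem rowIdeals_of_gt {i j' : ℕ} (h : j < j') : rowIdeals j Q (i, j') = ⊤ := by
  simp [rowIdeals, h.not_gt, h.ne']

theorem rowIdeals_mono {Q' : ℕ → Ideal R} (h : Q ≤ Q') : rowIdeals j Q ≤ rowIdeals j Q' := by
  rintro ⟨i, j'⟩
  rcases lt_trichotomy j' j with hj | rfl | hj
  · rw [rowIdeals_of_lt hj, rowIdeals_of_lt hj]
  · rw [rowIdeals_self, rowIdeals_self]; exact h i
  · rw [rowIdeals_of_gt hj, rowIdeals_of_gt hj]

theorem rowIdeals_succ_le (Q Q' : ℕ → Ideal R) : rowIdeals (j + 1) Q ≤ rowIdeals j Q' := by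
  rintro ⟨i, j'⟩
  rcases lt_or_ge j j' with hj | hj
  · rw [rowIdeals_of_gt hj]; exact le_top
  · rw [rowIdeals_of_lt (Nat.lt_succ_of_le hj)]; exact bot_le

theorem rowIdeals_le_row_succ (i j' : ℕ) :
    rowIdeals j Q (i, j') ≤ rowIdeals j Q (i, j' + 1) := by
  rcases lt_or_ge j' j with hj | hj
  · rw [rowIdeals_of_lt hj]; exact bot_le
  · rw [rowIdeals_of_gt (Nat.lt_succ_of_le hj)]; exact le_top

theorem rowIdeals_le_column_succ (hQ : Monotone Q) (i j' : ℕ) :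
    rowIdeals j Q (i, j') ≤ rowIdeals j Q (i + 1, j') := by
  simp only [rowIdeals]
  split_ifs
  exacts [le_rfl, hQ i.le_succ, le_rfl]

end RowIdeals

theorem map_mem_of_mem_finsuppSubmodule {ι R M : Type*} [Semiring R] [AddCommMonoid M] [Module R M]
    {f : (ι →₀ R) →ₗ[R] M} {C : ι → Ideal R} {X : Submodule R M}
    (h : ∀ q, ∀ r ∈ C q, f (Finsupp.single q r) ∈ X) {v : ι →₀ R}
    (hv : v ∈ Finsupp.submodule C) : f v ∈ X := by
  suffices hle : Finsupp.submodule C ≤ X.comap f from hle hv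
  rw [Finsupp.submodule_eq_iSup]
  refine iSup_le fun q => ?_
  rintro _ ⟨r, hr, rfl⟩
  exact h q r hr

theorem single_mem_finsuppSubmodule {ι R : Type*} [Semiring R] {C : ι → Ideal R} {q : ι} {r : R}
    (hr : r ∈ C q) : Finsupp.single q r ∈ Finsupp.submodule C := by
  rw [← Finsupp.comap_lsingle_submodule C q] at hr
  exact hr

theorem raising_mem_rowIdeals {R : Type*} [CommRing R] {j : ℕ} {Q : ℕ → Ideal R} (hQ : Monotone Q)
    {v : ℕ × ℕ →₀ R} (hv : v ∈ Finsupp.submodule (rowIdeals j Q)) :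
    raising R v ∈ Finsupp.submodule (rowIdeals j Q) := by
  refine map_mem_of_mem_finsuppSubmodule (fun ⟨i, j'⟩ r hr => ?_) hv
  rw [raising_single]
  exact single_mem_finsuppSubmodule (rowIdeals_le_column_succ hQ i j' hr)

theorem lowering_mem_rowIdeals {R : Type*} [CommRing R] {mu : R} {w : ℤ → R} {j : ℕ}
    {Q : ℕ → Ideal R} (hd : ∀ i, ∀ r ∈ Q (i + 1), lowerCoeff mu w (i + 1) j * r ∈ Q i)
    {v : ℕ × ℕ →₀ R} (hv : v ∈ Finsupp.submodule (rowIdeals j Q)) :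
    lowering mu w v ∈ Finsupp.submodule (rowIdeals j Q) := by
  refine map_mem_of_mem_finsuppSubmodule (fun ⟨i, j'⟩ r hr => ?_) hv
  have hr' := rowIdeals_le_row_succ i j' hr
  cases i with
  | zero =>
    rw [lowering_single_zero]
    exact single_mem_finsuppSubmodule hr'
  | succ i =>
    rw [lowering_single_succ]
    refine add_mem (single_mem_finsuppSubmodule (Ideal.mul_mem_left _ _ hr'))
      (single_mem_finsuppSubmodule ?_)
    simp only [rowIdeals] at hr ⊢
    split_ifs at hr ⊢ with hlt heq
    · exact Ideal.mul_mem_left _ _ hr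
    · exact heq ▸ hd i r hr
    · trivial

/-- `A` is generated over `S` by `u` and `d`, which act on the free `R`-module with basis `uⁱ dʲ` by
the raising and lowering operators. -/
structure IsLadderModule (S : Type*) {A R : Type*} [CommRing S] [Ring A] [Algebra S A] [CommRing R]
    [Module A (ℕ × ℕ →₀ R)] (mu : R) (w : ℤ → R) (u d : A) : Prop where
  adjoin_eq_top : Algebra.adjoin S {u, d} = ⊤
  u_smul : ∀ v : ℕ × ℕ →₀ R, u • v = raising R v
  d_smul : ∀ v : ℕ × ℕ →₀ R, d • v = lowering mu w v

namespace IsLadderModule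

variable {S A R : Type*} [CommRing S] [Ring A] [Algebra S A] [CommRing R] [Algebra S R]
  [Module A (ℕ × ℕ →₀ R)] [IsScalarTower S A (ℕ × ℕ →₀ R)]
  {mu : R} {w : ℤ → R} {u d : A}

/-- The `A`-submodule of vectors whose coefficients lie in the family `rowIdeals j Q`. -/
def rowSubmodule (h : IsLadderModule S mu w u d) (j : ℕ) (Q : ℕ → Ideal R) (hQ : Monotone Q)
    (hd : ∀ i, ∀ r ∈ Q (i + 1), lowerCoeff mu w (i + 1) j * r ∈ Q i) :
    Submodule A (ℕ × ℕ →₀ R) where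
  __ := (Finsupp.submodule (rowIdeals j Q)).toAddSubmonoid
  smul_mem' a v hv := by
    refine smul_mem_of_adjoin_eq_top h.adjoin_eq_top
      (P := (Finsupp.submodule (rowIdeals j Q)).restrictScalars S) ?_ a hv
    rintro _ (rfl | rfl) v hv
    · exact h.u_smul v ▸ raising_mem_rowIdeals hQ hv
    · exact h.d_smul v ▸ lowering_mem_rowIdeals hd hv

/-- The `A`-submodule of vectors whose coefficients vanish in the rows `l < j` and lie in the ideal
`Q` in row `j`. -/
def constRowSubmodule (h : IsLadderModule S mu w u d) (j : ℕ) (Q : Ideal R) :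
    Submodule A (ℕ × ℕ →₀ R) :=
  h.rowSubmodule j (fun _ => Q) monotone_const fun _ _ => Q.mul_mem_left _

variable {j : ℕ} {Q Q' : Ideal R}

theorem constRowSubmodule_mono (h : IsLadderModule S mu w u d) (hQ : Q ≤ Q') :
    h.constRowSubmodule j Q ≤ h.constRowSubmodule j Q' :=
  fun _ hv q => rowIdeals_mono (fun _ => hQ) q (hv q)

theorem constRowSubmodule_succ_le (h : IsLadderModule S mu w u d) (Q Q' : Ideal R) :
    h.constRowSubmodule (j + 1) Q ≤ h.constRowSubmodule j Q' :=
  fun _ hv q => rowIdeals_succ_le _ _ q (hv q)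

/-- Modulo an ideal containing all `lowerCoeff`, the powers of `u` generate an infinite descending
chain in each row. -/
theorem not_deviationLT_one_constRowSubmodule (h : IsLadderModule S mu w u d) (hQ : Q ≠ ⊤)
    (hd : ∀ i, lowerCoeff mu w i j ∈ Q) :
    ¬ DeviationLT 1 (h.constRowSubmodule j Q) (h.constRowSubmodule j ⊤) := by
  let stair (m i : ℕ) : Ideal R := if i < m then Q else ⊤
  have stair_mono (m : ℕ) : Monotone (stair m) := fun i i' hi => by
    simp only [stair]
    split_ifs <;> first | exact le_rfl | exact le_top | omega
  have stair_anti : Antitone stair := fun m m' hm i => by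
    simp only [stair]
    split_ifs <;> first | exact le_rfl | exact le_top | omega
  have le_stair (m i : ℕ) : Q ≤ stair m i := by
    simp only [stair]
    split_ifs <;> simp
  let f (m : ℕ) : Submodule A (ℕ × ℕ →₀ R) := h.rowSubmodule j (stair m) (stair_mono m)
    fun i r _ => le_stair m i (Q.mul_mem_right r (hd (i + 1)))
  intro hdev
  obtain ⟨m, hm⟩ := (hdev f (fun m m' hm v hv q => rowIdeals_mono (stair_anti hm) q (hv q))
    fun m => ⟨fun v hv q => rowIdeals_mono (le_stair m) q (hv q),
      fun v hv q => rowIdeals_mono (fun _ => le_top) q (hv q)⟩).exists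
  refine hm (lt_of_le_not_ge
    (fun v hv q => rowIdeals_mono (stair_anti m.le_succ) q (hv q)) fun hle => ?_)
  have hmem : Finsupp.single (m, j) (1 : R) ∈ f (m + 1) :=
    hle (single_mem_finsuppSubmodule (by simp [rowIdeals_self, stair]))
  have hone : (1 : R) ∈ Q := by
    simpa [rowIdeals_self, stair] using hmem (m, j)
  exact hQ (Q.eq_top_iff_one.2 hone)

variable [SMulCommClass R A (ℕ × ℕ →₀ R)] {k : ℕ}

theorem not_deviationLT_succ_constRowSubmodule (h : IsLadderModule S mu w u d) [hQ : Q.IsPrime]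
    (hlt : Q < Q') (hk : ¬ DeviationLT k (h.constRowSubmodule j Q') (h.constRowSubmodule j ⊤)) :
    ¬ DeviationLT (k + 1) (h.constRowSubmodule j Q) (h.constRowSubmodule j ⊤) := by
  obtain ⟨hle, r, hrQ', hrQ⟩ := SetLike.lt_iff_le_and_exists.1 hlt
  refine not_deviationLT_succ_of_end (f := DistribSMul.toLinearMap A _ r)
    (h.constRowSubmodule_mono hle) (h.constRowSubmodule_mono le_top) ?_ ?_ hk
  · intro v hv ⟨i, j'⟩
    have hv' := hv (i, j')
    simp only [rowIdeals] at hv' ⊢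
    split_ifs at hv' ⊢
    exacts [Ideal.mul_mem_left _ r hv', Q'.mul_mem_right _ hrQ', trivial]
  · rintro v ⟨hv, hrv⟩ ⟨i, j'⟩
    have hv' := hv (i, j')
    have hrv' := hrv (i, j')
    simp only [rowIdeals] at hv' hrv' ⊢
    split_ifs at hv' hrv' ⊢
    exacts [hv', (hQ.mem_or_mem hrv').resolve_left hrQ, trivial]

theorem not_deviationLT_constRowSubmodule_of_ltSeries (h : IsLadderModule S mu w u d)
    (p : LTSeries (PrimeSpectrum R)) (hd : ∀ i, lowerCoeff mu w i j ∈ p.last.asIdeal) :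
    ¬ DeviationLT (p.length + 1) (h.constRowSubmodule j p.head.asIdeal)
      (h.constRowSubmodule j ⊤) := by
  induction p using RelSeries.inductionOn with
  | singleton P => exact h.not_deviationLT_one_constRowSubmodule P.2.ne_top hd
  | cons p P hP ih =>
    rw [RelSeries.last_cons] at hd
    rw [RelSeries.head_cons, RelSeries.cons_length]
    exact h.not_deviationLT_succ_constRowSubmodule hP (ih hd)

theorem not_deviationLT_of_le_height (h : IsLadderModule S mu w u d) [hQ : Q.IsPrime]
    (hk : k ≤ Q.height) (hd : ∀ i j, lowerCoeff mu w i j ∈ Q) :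
    ¬ DeviationLT (k + 2) (⊥ : Submodule A (ℕ × ℕ →₀ R)) ⊤ := by
  obtain ⟨p, hlast, rfl⟩ := Order.exists_series_of_le_height (⟨Q, hQ⟩ : PrimeSpectrum R)
    (PrimeSpectrum.height_eq_orderHeight ⟨Q, hQ⟩ ▸ hk)
  intro hdev
  obtain ⟨j, hj⟩ := (hdev (fun j => h.constRowSubmodule j ⊤)
    (antitone_nat_of_succ_le fun j => h.constRowSubmodule_succ_le ⊤ ⊤)
    fun j => ⟨bot_le, le_top⟩).exists
  exact h.not_deviationLT_constRowSubmodule_of_ltSeries p (fun i => by rw [hlast]; exact hd i j)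
    (.mono (h.constRowSubmodule_succ_le ⊤ _) le_rfl hj)

end IsLadderModule

section CyclicLadderModule

variable {S A : Type*} [CommRing S] [Ring A] [Algebra S A] {mu : S} {w : ℤ → S[X]} {u d : A}

/-- Multiplication of the coefficient of `u⁰ d⁰` by `X = w 0` is the action of `d u - mu u d`. -/
theorem IsLadderModule.span_single_eq_top [Module A (ℕ × ℕ →₀ S[X])]
    [IsScalarTower S A (ℕ × ℕ →₀ S[X])] (h : IsLadderModule S (Polynomial.C mu) w u d)
    (hw : w 0 = Polynomial.X) :
    Submodule.span A {(Finsupp.single (0, 0) 1 : ℕ × ℕ →₀ S[X])} = ⊤ := by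
  set P := Submodule.span A {(Finsupp.single (0, 0) 1 : ℕ × ℕ →₀ S[X])}
  have scalar_smul_mem (s : S) {v : ℕ × ℕ →₀ S[X]} (hv : v ∈ P) : s • v ∈ P :=
    (P.restrictScalars S).smul_mem s hv
  have mul_X_mem {r : S[X]} (hr : Finsupp.single (0, 0) r ∈ P) :
      Finsupp.single (0, 0) (r * Polynomial.X) ∈ P := by
    have hact : d • u • Finsupp.single (0, 0) r - mu • u • d • Finsupp.single (0, 0) r =
        Finsupp.single (0, 0) (r * Polynomial.X) := by
      simp [h.u_smul, h.d_smul, raising_single, lowering_single_zero, lowering_single_succ,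
        lowerCoeff, hw, Polynomial.smul_eq_C_mul, mul_comm r]
    exact hact ▸ P.sub_mem (P.smul_mem _ (P.smul_mem _ hr))
      (scalar_smul_mem _ (P.smul_mem _ (P.smul_mem _ hr)))
  have monomial_mem (m : ℕ) (s : S) :
      Finsupp.single (0, 0) (Polynomial.C s * Polynomial.X ^ m) ∈ P := by
    induction m with
    | zero =>
      simpa [Polynomial.smul_eq_C_mul] using scalar_smul_mem s (Submodule.mem_span_singleton_self _)
    | succ m ih => simpa only [pow_succ, mul_assoc] using mul_X_mem ih
  have single_zero_mem (j : ℕ) (r : S[X]) : Finsupp.single (0, j) r ∈ P := by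
    induction j with
    | zero =>
      induction r using Polynomial.induction_on' with
      | add p q hp hq => simpa only [Finsupp.single_add] using P.add_mem hp hq
      | monomial m s => simpa only [Polynomial.C_mul_X_pow_eq_monomial] using monomial_mem m s
    | succ j ih => simpa only [h.d_smul, lowering_single_zero] using P.smul_mem d ih
  have single_mem (i j : ℕ) (r : S[X]) : Finsupp.single (i, j) r ∈ P := by
    induction i with
    | zero => exact single_zero_mem j r
    | succ i ih => simpa only [h.u_smul, raising_single] using P.smul_mem u ih
  refine eq_top_iff.2 fun v _ => ?_
  rw [← Finsupp.sum_single v]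
  exact sum_mem fun q _ => single_mem q.1 q.2 (v q)

theorem not_deviationLT_ideal_of_algHom_ladder (hA : Algebra.adjoin S {u, d} = ⊤)
    (ρ : A →ₐ[S] Module.End S[X] (ℕ × ℕ →₀ S[X])) (hu : ρ u = raising S[X])
    (hd : ρ d = lowering (Polynomial.C mu) w) (hw : w 0 = Polynomial.X)
    {Q : Ideal S[X]} [Q.IsPrime] (hQ : ∀ i j, lowerCoeff (Polynomial.C mu) w i j ∈ Q) {k : ℕ}
    (hk : k ≤ Q.height) : ¬ DeviationLT (k + 2) (⊥ : Ideal A) ⊤ := by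
  let _ : Module A (ℕ × ℕ →₀ S[X]) := Module.compHom _ ρ.toRingHom
  have smul_eq (a : A) (v : ℕ × ℕ →₀ S[X]) : a • v = ρ a v := rfl
  have : SMulCommClass S[X] A (ℕ × ℕ →₀ S[X]) :=
    ⟨fun r a v => by rw [smul_eq, smul_eq, map_smul]⟩
  have : IsScalarTower S A (ℕ × ℕ →₀ S[X]) :=
    ⟨fun s a v => by rw [smul_eq, smul_eq, map_smul, LinearMap.smul_apply]⟩
  have hladder : IsLadderModule S (Polynomial.C mu) w u d :=
    ⟨hA, fun v => by rw [smul_eq, hu], fun v => by rw [smul_eq, hd]⟩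
  have hsurj : Function.Surjective
      (LinearMap.toSpanSingleton A (ℕ × ℕ →₀ S[X]) (Finsupp.single (0, 0) 1)) := by
    rw [← LinearMap.range_eq_top, LinearMap.range_toSpanSingleton, hladder.span_single_eq_top hw]
  exact fun hdev => hladder.not_deviationLT_of_le_height hk hQ (.of_surjective hsurj hdev)

end CyclicLadderModule

section Height

theorem height_eq_add_one_of_isMaximal_polynomial {R : Type*} [CommRing R] [IsNoetherianRing R]
    [IsJacobsonRing R] {n : ℕ∞} (hR : ∀ P : Ideal R, P.IsMaximal → P.height = n) (Q : Ideal R[X])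
    [Q.IsMaximal] : Q.height = n + 1 := by
  rw [Polynomial.height_eq_height_add_one (Q.under R) Q,
    hR (Q.under R) (Polynomial.isMaximal_comap_C_of_isJacobsonRing Q)]

theorem height_eq_of_isMaximal_mvPolynomial {K : Type*} [Field K] {n : ℕ}
    (P : Ideal (MvPolynomial (Fin n) K)) [hP : P.IsMaximal] : P.height = n := by
  induction n with
  | zero =>
    have hfield : IsField (MvPolynomial (Fin 0) K) :=
      (isEmptyRingEquiv K (Fin 0)).toMulEquiv.isField (Field.toIsField K)
    let _ := hfield.toField
    rw [(Ideal.eq_bot_or_top P).resolve_right hP.ne_top]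
    simp
  | succ n ih =>
    let e := (finSuccEquiv K n).symm.toRingEquiv
    have : (P.comap e).IsMaximal := Ideal.comap_isMaximal_of_equiv e
    rw [← RingEquiv.height_comap e P,
      height_eq_add_one_of_isMaximal_polynomial (fun P _ => ih P) (P.comap e)]
    norm_cast

theorem exists_isMaximal_X_mem_C_mem {S : Type*} [CommRing S] {φ : S} (hφ : ¬ IsUnit φ) :
    ∃ Q : Ideal S[X], Q.IsMaximal ∧ Polynomial.X ∈ Q ∧ Polynomial.C φ ∈ Q := by
  obtain ⟨P, hP, hφP⟩ := exists_max_ideal_of_mem_nonunits hφ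
  exact ⟨P.comap (Polynomial.evalRingHom 0),
    Ideal.comap_isMaximal_of_surjective _ fun s => ⟨Polynomial.C s, Polynomial.eval_C⟩,
    by simp, by simpa using hφP⟩

end Height

/-- The defining relations of the down-up algebra, for elements of an arbitrary `S`-algebra. -/
structure DownUpRelations {S B : Type*} [CommRing S] [Ring B] [Algebra S B] (α β φ : S)
    (u d : B) : Prop where
  ddu : d * d * u = α • (d * u * d) + β • (u * d * d) + φ • d
  duu : d * u * u = α • (u * d * u) + β • (u * u * d) + φ • u

theorem downUpRelations_iff {S B : Type*} [CommRing S] [Ring B] [Algebra S B] {lam mu φ : S}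
    {u w d : B} (hdu : d * u = mu • (u * d) + w) :
    DownUpRelations (lam + mu) (-(lam * mu)) φ u d ↔
      d * w = lam • (w * d) + φ • d ∧ w * u = lam • (u * w) + φ • u := by
  obtain rfl : w = d * u - mu • (u * d) := by rw [hdu, add_sub_cancel_left]
  have hddu : d * (d * u - mu • (u * d)) - (lam • ((d * u - mu • (u * d)) * d) + φ • d) =
      d * d * u - ((lam + mu) • (d * u * d) + -(lam * mu) • (u * d * d) + φ • d) := by
    simp only [mul_sub, sub_mul, mul_smul_comm, smul_mul_assoc, mul_assoc]
    module
  have hduu : (d * u - mu • (u * d)) * u - (lam • (u * (d * u - mu • (u * d))) + φ • u) =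
      d * u * u - ((lam + mu) • (u * d * u) + -(lam * mu) • (u * u * d) + φ • u) := by
    simp only [mul_sub, sub_mul, mul_smul_comm, smul_mul_assoc, mul_assoc]
    module
  rw [← sub_eq_zero (a := d * _), hddu, ← sub_eq_zero (a := _ * u), hduu, sub_eq_zero, sub_eq_zero]
  exact ⟨fun h => ⟨h.ddu, h.duu⟩, fun h => ⟨h.1, h.2⟩⟩

theorem downUpRelations_raising_lowering {S : Type*} [CommRing S] {lam φ : S} (mu : S)
    {w : ℤ → S[X]} (hw : ∀ m, w (m + 1) = Polynomial.C lam * w m + Polynomial.C φ) :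
    DownUpRelations (lam + mu) (-(lam * mu)) φ (raising S[X]) (lowering (Polynomial.C mu) w) := by
  have smul_eq (s : S) (f : Module.End S[X] (ℕ × ℕ →₀ S[X])) : s • f = Polynomial.C s • f :=
    (algebraMap_smul S[X] s f).symm
  refine (downUpRelations_iff (w := weight w) ?_).2 ⟨?_, ?_⟩
  · rw [smul_eq, lowering_mul_raising]
  · rw [smul_eq, smul_eq, lowering_mul_weight _ hw]
  · rw [smul_eq, smul_eq, weight_mul_raising hw]

namespace DownUp

variable {K : Type} [Field K] {n : ℕ} {α β : K} {φ : MvPolynomial (Fin n) K}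

theorem coe_mkAlgHom :
    ⇑(RingQuot.mkAlgHom (MvPolynomial (Fin n) K) (Rel α β φ)) =
      RingQuot.mkAlgHom K (Rel α β φ) := by
  ext x
  exact (DFunLike.congr_fun (RingQuot.mkAlgHom_coe _ _) x).trans
    (DFunLike.congr_fun (RingQuot.mkAlgHom_coe _ _) x).symm

theorem adjoin_U_D :
    Algebra.adjoin (MvPolynomial (Fin n) K) {U α β φ, D α β φ} = ⊤ := by
  have range_ι : Set.range (FreeAlgebra.ι (MvPolynomial (Fin n) K)) = {uF, dF} := by
    ext x
    exact ⟨fun ⟨g, hg⟩ => hg ▸ g.casesOn (.inl rfl) (.inr rfl),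
      fun h => h.elim (fun h => ⟨.u, h.symm⟩) fun h => ⟨.d, h.symm⟩⟩
  have himage := AlgHom.map_adjoin (RingQuot.mkAlgHom (MvPolynomial (Fin n) K) (Rel α β φ))
    (Set.range (FreeAlgebra.ι (MvPolynomial (Fin n) K)))
  rw [FreeAlgebra.adjoin_range_ι, range_ι, Set.image_pair, coe_mkAlgHom, Algebra.map_top,
    (AlgHom.range_eq_top _).2 (RingQuot.mkAlgHom_surjective _ _)] at himage
  exact himage.symm

theorem algHom_rel_iff {B : Type*} [Ring B] [Algebra (MvPolynomial (Fin n) K) B]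
    (f : F K n →ₐ[MvPolynomial (Fin n) K] B) :
    (∀ ⦃x y⦄, Rel α β φ x y → f x = f y) ↔ DownUpRelations (C α) (C β) φ (f uF) (f dF) := by
  have smul_eq (a : K) (x : F K n) : a • x = (C a : MvPolynomial (Fin n) K) • x :=
    (algebraMap_smul (MvPolynomial (Fin n) K) a x).symm
  have hddu : f (α • (dF * uF * dF) + β • (uF * dF * dF) + algebraMap _ _ φ * dF) =
      (C α : MvPolynomial (Fin n) K) • (f dF * f uF * f dF) +
        (C β : MvPolynomial (Fin n) K) • (f uF * f dF * f dF) + φ • f dF := by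
    simp only [smul_eq, ← Algebra.smul_def, map_add, map_mul, map_smul]
  have hduu : f (α • (uF * dF * uF) + β • (uF * uF * dF) + uF * algebraMap _ _ φ) =
      (C α : MvPolynomial (Fin n) K) • (f uF * f dF * f uF) +
        (C β : MvPolynomial (Fin n) K) • (f uF * f uF * f dF) + φ • f uF := by
    simp only [smul_eq, ← Algebra.commutes, ← Algebra.smul_def, map_add, map_mul, map_smul]
  constructor
  · exact fun h => ⟨by simpa only [map_mul, hddu] using h .ddu,
      by simpa only [map_mul, hduu] using h .duu⟩
  · rintro h _ _ (_ | _)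
    · simpa only [map_mul, hddu] using h.ddu
    · simpa only [map_mul, hduu] using h.duu

theorem downUpRelations_U_D : DownUpRelations (C α) (C β) φ (U α β φ) (D α β φ) := by
  have h := (algHom_rel_iff (B := A α β φ) (RingQuot.mkAlgHom _ (Rel α β φ))).1
    fun _ _ => RingQuot.mkAlgHom_rel _
  rwa [coe_mkAlgHom] at h

theorem exists_algHom {B : Type*} [Ring B] [Algebra (MvPolynomial (Fin n) K) B] {u d : B}
    (h : DownUpRelations (C α) (C β) φ u d) :
    ∃ ρ : A α β φ →ₐ[MvPolynomial (Fin n) K] B, ρ (U α β φ) = u ∧ ρ (D α β φ) = d := by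
  let f : F K n →ₐ[MvPolynomial (Fin n) K] B :=
    FreeAlgebra.lift _ fun g => g.casesOn u d
  have hu : f uF = u := FreeAlgebra.lift_ι_apply _ _
  have hd : f dF = d := FreeAlgebra.lift_ι_apply _ _
  have hf : ∀ ⦃x y⦄, Rel α β φ x y → f x = f y := (algHom_rel_iff f).2 (by rwa [hu, hd])
  have hlift (x : F K n) : RingQuot.liftAlgHom _ ⟨f, hf⟩ (RingQuot.mkAlgHom K _ x) = f x := by
    rw [← coe_mkAlgHom, RingQuot.liftAlgHom_mkAlgHom_apply]
  exact ⟨RingQuot.liftAlgHom _ ⟨f, hf⟩, (hlift uF).trans hu, (hlift dF).trans hd⟩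

variable {lam mu : K}

theorem isDownUpTriple_U_D :
    IsDownUpTriple (C lam) (C mu) φ (U (lam + mu) (-(lam * mu)) φ)
      (D (lam + mu) (-(lam * mu)) φ * U _ _ φ - C (σ := Fin n) mu • (U _ _ φ * D _ _ φ))
      (D _ _ φ) := by
  have hrel := downUpRelations_U_D (α := lam + mu) (β := -(lam * mu)) (φ := φ)
  rw [map_add, map_neg, map_mul] at hrel
  have hdu : D (lam + mu) (-(lam * mu)) φ * U _ _ φ = C (σ := Fin n) mu • (U _ _ φ * D _ _ φ) +
      (D _ _ φ * U _ _ φ - C (σ := Fin n) mu • (U _ _ φ * D _ _ φ)) := by abel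
  obtain ⟨hdw, hwu⟩ := (downUpRelations_iff hdu).1 hrel
  exact ⟨adjoin_U_D, hdu, hdw, hwu⟩

theorem deviationLT_ideal (hlam : lam ≠ 0) (hmu : mu ≠ 0) :
    DeviationLT (n + 4) (⊥ : Ideal (A (lam + mu) (-(lam * mu)) φ)) ⊤ :=
  isDownUpTriple_U_D.deviationLT_ideal (hlam.isUnit.map C) (hmu.isUnit.map C)
    .ideal_mvPolynomial

theorem not_deviationLT_ideal (hlam : lam ≠ 0) (hφ : ¬ IsUnit φ) :
    ¬ DeviationLT (n + 3) (⊥ : Ideal (A (lam + mu) (-(lam * mu)) φ)) ⊤ := by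
  have hlam' : IsUnit (Polynomial.C (C (σ := Fin n) lam)) := (hlam.isUnit.map C).map Polynomial.C
  obtain ⟨w, hw0, hw⟩ := exists_weights hlam' (Polynomial.C φ) Polynomial.X
  obtain ⟨Q, hQ, hXQ, hφQ⟩ := exists_isMaximal_X_mem_C_mem hφ
  have hrel := downUpRelations_raising_lowering (C (σ := Fin n) mu) hw
  rw [← map_add, ← map_mul, ← map_neg] at hrel
  obtain ⟨ρ, hu, hd⟩ := exists_algHom hrel
  have hheight : Q.height = (n + 1 : ℕ) :=
    height_eq_add_one_of_isMaximal_polynomial (fun P _ => height_eq_of_isMaximal_mvPolynomial P) Q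
  exact not_deviationLT_ideal_of_algHom_ladder (A := A _ _ φ) adjoin_U_D ρ hu hd hw0
    (lowerCoeff_mem _ (weight_mem hlam' hw (hw0 ▸ hXQ) hφQ)) hheight.ge

end DownUp

theorem exists_add_eq_neg_mul_eq {K : Type*} [Field K] [IsAlgClosed K] (α : K) {β : K}
    (hβ : β ≠ 0) : ∃ lam mu : K, lam ≠ 0 ∧ mu ≠ 0 ∧ lam + mu = α ∧ -(lam * mu) = β := by
  let p : K[X] := Polynomial.X ^ 2 - Polynomial.C α * Polynomial.X - Polynomial.C β
  have hdeg : p.degree = 2 := by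
    simp only [p]
    compute_degree!
  obtain ⟨lam, hroot⟩ := IsAlgClosed.exists_root p (by rw [hdeg]; decide)
  have hlam : lam ^ 2 - α * lam - β = 0 := by simpa [p] using hroot
  have hβ_eq : -(lam * (α - lam)) = β := by linear_combination hlam
  have hne : lam * (α - lam) ≠ 0 := neg_ne_zero.1 (hβ_eq ▸ hβ)
  exact ⟨lam, α - lam, left_ne_zero_of_mul hne, right_ne_zero_of_mul hne, by ring, hβ_eq⟩

theorem not_isUnit_of_forall_ne_C {σ R : Type*} [CommRing R] [IsReduced R] {φ : MvPolynomial σ R}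
    (hφ : ∀ c, φ ≠ C c) : ¬ IsUnit φ := fun hunit => by
  obtain ⟨c, -, hc⟩ := isUnit_iff_eq_C_of_isReduced.1 hunit
  exact hφ c hc

open DownUp in
theorem downUp_krullDim_general {K : Type} [Field K] {n : ℕ} {lam mu : K} (hlam : lam ≠ 0)
    (hmu : mu ≠ 0) {φ : MvPolynomial (Fin n) K} (hφ : ¬ IsUnit φ) :
    krullLE (A (lam + mu) (-(lam * mu)) φ) (n + 4) (A (lam + mu) (-(lam * mu)) φ) ∧
    ¬ krullLE (A (lam + mu) (-(lam * mu)) φ) (n + 3) (A (lam + mu) (-(lam * mu)) φ) := by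
  rw [krullLE_iff_deviationLT, krullLE_iff_deviationLT]
  exact ⟨deviationLT_ideal hlam hmu, not_deviationLT_ideal hlam hφ⟩

open DownUp in
/-- If K is algebraically closed, β ≠ 0 and φ is not constant, then the
Gabriel–Rentschler Krull dimension of A(α,β,φ) (as a left module over itself)
is exactly n+3: it is ≤ n+3 but not ≤ n+2. -/
theorem downUp_krullDim {K : Type} [Field K] [IsAlgClosed K] {n : ℕ}
    (α β : K) (hβ : β ≠ 0) (φ : MvPolynomial (Fin n) K)
    (hφ : ∀ c : K, φ ≠ MvPolynomial.C c) :
    krullLE (A α β φ) (n + 4) (A α β φ) ∧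
    ¬ krullLE (A α β φ) (n + 3) (A α β φ) := by
  obtain ⟨lam, mu, hlam, hmu, rfl, rfl⟩ := exists_add_eq_neg_mul_eq α hβ
  exact downUp_krullDim_general hlam hmu (not_isUnit_of_forall_ne_C hφ)
end

section
/- Let K have characteristic 0 and let r, s ∈ K* with r, s ≠ 1 and rⁱsʲ = 1 only for i = j = 0; set α = r+s, β = −rs, n = 1. For φ₁, φ₂ ∈ K[t], the down-up algebras A(α,β,φ₁) and A(α,β,φ₂) are isomorphic as K-algebras if and only if there exist η, a ∈ K* and b ∈ K with η·φ₂(t) = φ₁(at+b). -/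
open MvPolynomial

/-!
The abelianization of `A(α,β,φ)` is the coordinate ring of the union of the axis `u = d = 0` and
the surface `(1 - α - β) u d = φ(t)`. An isomorphism of abelianizations must match the two axes:
otherwise `K[t]` would, generically, be the coordinate ring of the surface component, on which `t`
and `u` are algebraically independent, so that `K[t][u]` would embed into `K[t]`. The induced
automorphism `σ` of `K[t]` carries the intersection `φ₁ = 0` of the two components to `φ₂ = 0`,
scheme-theoretically, whence `σ φ₁` and `φ₂` differ by a unit. Conversely `u ↦ η u`, `d ↦ d`,
`t ↦ σ t` is an isomorphism whenever `η φ₂ = σ φ₁`. In one variable the automorphisms of `K[t]`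
are the affine substitutions `t ↦ a t + b`.
-/

namespace DownUp

section PolynomialRings

theorem not_injective_algHom_polynomial_mvPolynomial {R : Type*} [CommRing R] [IsDomain R] {n : ℕ}
    (f : Polynomial (MvPolynomial (Fin n) R) →ₐ[R] MvPolynomial (Fin n) R) :
    ¬ Function.Injective f := by
  intro hf
  have h := trdeg_le_of_injective (f.comp (finSuccEquiv R n).toAlgHom)
    (hf.comp (finSuccEquiv R n).injective)
  simp only [MvPolynomial.trdeg_of_isDomain, Cardinal.mk_fin, Cardinal.lift_natCast,
    Nat.cast_le] at h
  exact n.lt_irrefl h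

theorem natDegree_algEquiv_X {R : Type*} [CommRing R] [IsDomain R]
    (e : Polynomial R ≃ₐ[R] Polynomial R) : (e Polynomial.X).natDegree = 1 := by
  have h : (e.symm Polynomial.X).comp (e Polynomial.X) = Polynomial.X :=
    calc (e.symm Polynomial.X).comp (e Polynomial.X)
      _ = e (e.symm Polynomial.X) := by
        rw [Polynomial.comp_eq_aeval, Polynomial.aeval_algHom_apply, Polynomial.aeval_X_left_apply]
      _ = Polynomial.X := e.apply_symm_apply _
  have hdeg := congrArg Polynomial.natDegree h
  rw [Polynomial.natDegree_comp, Polynomial.natDegree_X] at hdeg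
  exact Nat.eq_one_of_mul_eq_one_left hdeg

variable {K ι : Type*} [Field K]

theorem exists_smul_eq_of_associated {p q : MvPolynomial ι K} (h : Associated p q) :
    ∃ η : K, η ≠ 0 ∧ η • p = q := by
  obtain ⟨w, rfl⟩ := h
  obtain ⟨η, hη, hw⟩ := isUnit_iff_eq_C_of_isReduced.1 w.isUnit
  exact ⟨η, hη.ne_zero, by rw [hw, mul_comm, smul_eq_C_mul]⟩

variable [Unique ι]

theorem exists_algEquiv_X_eq (σ : MvPolynomial ι K ≃ₐ[K] MvPolynomial ι K) :
    ∃ a b : K, a ≠ 0 ∧ σ (X default) = C a * X default + C b := by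
  let e := uniqueAlgEquiv K ι
  obtain ⟨a, ha, b, h⟩ :=
    Polynomial.natDegree_eq_one.1 (natDegree_algEquiv_X ((e.symm.trans σ).trans e))
  refine ⟨a, b, ha, e.injective ?_⟩
  simpa [e] using h.symm

/-- The automorphism `t ↦ a t + b` of the polynomial ring in one variable. -/
noncomputable def affineAlgEquiv {a : K} (ha : a ≠ 0) (b : K) :
    MvPolynomial ι K ≃ₐ[K] MvPolynomial ι K :=
  .ofAlgHom (aeval fun _ ↦ C a * X default + C b) (aeval fun _ ↦ C a⁻¹ * (X default - C b))
    (MvPolynomial.algHom_ext fun i ↦ by simp [← mul_assoc, ← C_mul, ha, Unique.eq_default i])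
    (MvPolynomial.algHom_ext fun i ↦ by simp [← mul_assoc, ← C_mul, ha, Unique.eq_default i])

theorem exists_algEquiv_apply_eq_iff {p q : MvPolynomial ι K} :
    (∃ σ : MvPolynomial ι K ≃ₐ[K] MvPolynomial ι K, q = σ p) ↔
      ∃ a b : K, a ≠ 0 ∧ q = aeval (fun _ ↦ C a * X default + C b) p := by
  constructor
  · rintro ⟨σ, rfl⟩
    obtain ⟨a, b, ha, h⟩ := exists_algEquiv_X_eq σ
    have hσ : σ.toAlgHom = aeval fun _ ↦ C a * X default + C b :=
      MvPolynomial.algHom_ext fun i ↦ by rw [Unique.eq_default i, aeval_X]; exact h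
    exact ⟨a, b, ha, DFunLike.congr_fun hσ p⟩
  · rintro ⟨a, b, ha, rfl⟩
    exact ⟨affineAlgEquiv ha b, rfl⟩

end PolynomialRings

section RingAbelianization

/-- The relation on a ring that identifies `a * b` with `b * a`. -/
inductive MulCommRel (B : Type*) [Mul B] : B → B → Prop
  | swap (a b : B) : MulCommRel B (a * b) (b * a)

/-- The largest commutative quotient of a ring. -/
def RingAbelianization (B : Type*) [Ring B] : Type _ :=
  RingQuot (MulCommRel B)

namespace RingAbelianization

variable {R B C : Type*} [CommSemiring R] [Ring B] [Algebra R B]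

noncomputable instance : Ring (RingAbelianization B) :=
  inferInstanceAs (Ring (RingQuot (MulCommRel B)))

noncomputable instance : CommRing (RingAbelianization B) where
  mul_comm x y := by
    obtain ⟨a, rfl⟩ := RingQuot.mkRingHom_surjective (MulCommRel B) x
    obtain ⟨b, rfl⟩ := RingQuot.mkRingHom_surjective (MulCommRel B) y
    exact (map_mul _ a b).symm.trans
      ((RingQuot.mkRingHom_rel (MulCommRel.swap a b)).trans (map_mul _ b a))

noncomputable instance : Algebra R (RingAbelianization B) :=
  inferInstanceAs (Algebra R (RingQuot (MulCommRel B)))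

variable (R B) in
/-- The quotient map onto the abelianization. -/
noncomputable def mk : B →ₐ[R] RingAbelianization B :=
  RingQuot.mkAlgHom R (MulCommRel B)

section Lift

variable [CommRing C] [Algebra R C]

/-- The universal property: maps to commutative algebras factor through the abelianization. -/
noncomputable def lift (f : B →ₐ[R] C) : RingAbelianization B →ₐ[R] C :=
  RingQuot.liftAlgHom R ⟨f, by rintro _ _ ⟨a, b⟩; rw [map_mul, map_mul, mul_comm]⟩

@[simp]
theorem lift_mk (f : B →ₐ[R] C) (x : B) : lift f (mk R B x) = f x :=
  RingQuot.liftAlgHom_mkAlgHom_apply R f _ x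

@[ext]
theorem algHom_ext {f g : RingAbelianization B →ₐ[R] C} (h : f.comp (mk R B) = g.comp (mk R B)) :
    f = g :=
  RingQuot.ringQuot_ext' _ f g h

end Lift

/-- Isomorphic algebras have isomorphic abelianizations. -/
noncomputable def congr [Ring C] [Algebra R C] (e : B ≃ₐ[R] C) :
    RingAbelianization B ≃ₐ[R] RingAbelianization C :=
  AlgEquiv.ofAlgHom (lift ((mk R C).comp e)) (lift ((mk R B).comp e.symm))
    (by ext; simp) (by ext; simp)

end RingAbelianization

end RingAbelianization

section Presentation

variable {K : Type} [Field K] {n : ℕ} {α β : K} {φ : MvPolynomial (Fin n) K}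

theorem T_mul_comm (p : MvPolynomial (Fin n) K) (x : A α β φ) :
    T α β φ p * x = x * T α β φ p := by
  obtain ⟨y, rfl⟩ := RingQuot.mkAlgHom_surjective K (Rel α β φ) x
  exact (map_mul _ _ y).symm.trans
    ((congrArg _ (Algebra.commutes p y)).trans (map_mul _ y _))

theorem D_mul_D_mul_U :
    D α β φ * D α β φ * U α β φ = α • (D α β φ * U α β φ * D α β φ)
      + β • (U α β φ * D α β φ * D α β φ) + T α β φ φ * D α β φ := by
  have h := RingQuot.mkAlgHom_rel K (Rel.ddu (α := α) (β := β) (φ := φ))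
  simp only [map_mul, map_add, map_smul] at h
  exact h

theorem D_mul_U_mul_U :
    D α β φ * U α β φ * U α β φ = α • (U α β φ * D α β φ * U α β φ)
      + β • (U α β φ * U α β φ * D α β φ) + U α β φ * T α β φ φ := by
  have h := RingQuot.mkAlgHom_rel K (Rel.duu (α := α) (β := β) (φ := φ))
  simp only [map_mul, map_add, map_smul] at h
  exact h

variable {B : Type*} [Semiring B] [Algebra K B]

theorem algHom_ext {f g : A α β φ →ₐ[K] B} (hT : ∀ p, f (T α β φ p) = g (T α β φ p))
    (hU : f (U α β φ) = g (U α β φ)) (hD : f (D α β φ) = g (D α β φ)) : f = g := by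
  refine RingQuot.ringQuot_ext' _ f g (AlgHom.ext fun y ↦ ?_)
  induction y using FreeAlgebra.induction with
  | grade0 p => exact hT p
  | grade1 x =>
    cases x
    · exact hU
    · exact hD
  | mul a b ha hb => simp only [map_mul, ha, hb]
  | add a b ha hb => simp only [map_add, ha, hb]

section Lift

variable (S : MvPolynomial (Fin n) K →ₐ[K] B) (u d : B) (hS : ∀ p x, S p * x = x * S p)

/-- The map out of the free algebra given by central images of the `tᵢ` and images of `u`, `d`. -/
noncomputable def freeLift : F K n →ₐ[K] B :=
  letI : Algebra (MvPolynomial (Fin n) K) B := S.toRingHom.toAlgebra' hS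
  haveI : IsScalarTower K (MvPolynomial (Fin n) K) B :=
    IsScalarTower.of_algebraMap_eq fun x ↦ (S.commutes x).symm
  (FreeAlgebra.lift (MvPolynomial (Fin n) K) fun | .u => u | .d => d).restrictScalars K

theorem freeLift_uF : freeLift S u d hS uF = u :=
  letI : Algebra (MvPolynomial (Fin n) K) B := S.toRingHom.toAlgebra' hS
  FreeAlgebra.lift_ι_apply _ _

theorem freeLift_dF : freeLift S u d hS dF = d :=
  letI : Algebra (MvPolynomial (Fin n) K) B := S.toRingHom.toAlgebra' hS
  FreeAlgebra.lift_ι_apply _ _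

theorem freeLift_algebraMap (p : MvPolynomial (Fin n) K) :
    freeLift S u d hS (algebraMap _ _ p) = S p :=
  letI : Algebra (MvPolynomial (Fin n) K) B := S.toRingHom.toAlgebra' hS
  AlgHom.commutes (FreeAlgebra.lift _ _) p

variable (hddu : d * d * u = α • (d * u * d) + β • (u * d * d) + S φ * d)
  (hduu : d * u * u = α • (u * d * u) + β • (u * u * d) + u * S φ)

/-- The universal property of the down-up algebra. -/
noncomputable def lift : A α β φ →ₐ[K] B :=
  RingQuot.liftAlgHom K ⟨freeLift S u d hS, by
    rintro _ _ (_ | _)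
    · simpa only [map_mul, map_add, map_smul, freeLift_uF, freeLift_dF, freeLift_algebraMap]
        using hddu
    · simpa only [map_mul, map_add, map_smul, freeLift_uF, freeLift_dF, freeLift_algebraMap]
        using hduu⟩

@[simp]
theorem lift_T (p : MvPolynomial (Fin n) K) : lift S u d hS hddu hduu (T α β φ p) = S p :=
  (RingQuot.liftAlgHom_mkAlgHom_apply K _ _ _).trans (freeLift_algebraMap S u d hS p)

@[simp]
theorem lift_U : lift S u d hS hddu hduu (U α β φ) = u :=
  (RingQuot.liftAlgHom_mkAlgHom_apply K _ _ _).trans (freeLift_uF S u d hS)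

@[simp]
theorem lift_D : lift S u d hS hddu hduu (D α β φ) = d :=
  (RingQuot.liftAlgHom_mkAlgHom_apply K _ _ _).trans (freeLift_dF S u d hS)

end Lift

end Presentation

section Rescaling

variable {K : Type} [Field K] {n : ℕ} {φ₁ φ₂ : MvPolynomial (Fin n) K} {η : K}

/-- The map `u ↦ η u`, `d ↦ d`, `t ↦ σ t` between down-up algebras. -/
noncomputable def rescale (α β : K) (σ : MvPolynomial (Fin n) K →ₐ[K] MvPolynomial (Fin n) K)
    (h : η • φ₂ = σ φ₁) : A α β φ₁ →ₐ[K] A α β φ₂ :=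
  lift ((T α β φ₂).comp σ) (η • U α β φ₂) (D α β φ₂) (fun p x ↦ T_mul_comm (σ p) x)
    (by
      rw [AlgHom.comp_apply, ← h, map_smul]
      simp only [smul_mul_assoc, mul_smul_comm, D_mul_D_mul_U, smul_add, smul_comm η])
    (by
      rw [AlgHom.comp_apply, ← h, map_smul]
      simp only [smul_mul_assoc, mul_smul_comm, D_mul_U_mul_U, smul_add, smul_comm η])

section

variable {α β : K} {σ : MvPolynomial (Fin n) K →ₐ[K] MvPolynomial (Fin n) K} (h : η • φ₂ = σ φ₁)

theorem rescale_T (p : MvPolynomial (Fin n) K) :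
    rescale α β σ h (T α β φ₁ p) = T α β φ₂ (σ p) :=
  lift_T ..

theorem rescale_U : rescale α β σ h (U α β φ₁) = η • U α β φ₂ :=
  lift_U ..

theorem rescale_D : rescale α β σ h (D α β φ₁) = D α β φ₂ :=
  lift_D ..

end

theorem rescale_comp_rescale {α β : K} {η' : K}
    {σ τ : MvPolynomial (Fin n) K →ₐ[K] MvPolynomial (Fin n) K} (hη : η * η' = 1)
    (hστ : ∀ p, σ (τ p) = p) (h : η • φ₂ = σ φ₁) (h' : η' • φ₁ = τ φ₂) :
    (rescale α β σ h).comp (rescale α β τ h') = AlgHom.id K (A α β φ₂) := by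
  refine DownUp.algHom_ext (fun p ↦ ?_) ?_ ?_ <;> rw [AlgHom.comp_apply, AlgHom.id_apply]
  · rw [rescale_T, rescale_T, hστ]
  · rw [rescale_U, map_smul, rescale_U, smul_smul, mul_comm, hη, one_smul]
  · rw [rescale_D, rescale_D]

theorem nonempty_algEquiv_of_smul_eq (α β : K) (hη : η ≠ 0)
    (σ : MvPolynomial (Fin n) K ≃ₐ[K] MvPolynomial (Fin n) K) (h : η • φ₂ = σ φ₁) :
    Nonempty (A α β φ₁ ≃ₐ[K] A α β φ₂) := by
  have h' : η⁻¹ • φ₁ = σ.symm φ₂ := by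
    rw [inv_smul_eq_iff₀ hη, ← map_smul, h, AlgEquiv.symm_apply_apply]
  exact ⟨.ofAlgHom (rescale α β σ h) (rescale α β σ.symm h')
    (rescale_comp_rescale (mul_inv_cancel₀ hη) (fun p ↦ by simp) h h')
    (rescale_comp_rescale (inv_mul_cancel₀ hη) (fun p ↦ by simp) h' h)⟩

end Rescaling

section Abelianization

variable {K : Type} [Field K] {n : ℕ}

/-- The abelianization of the down-up algebra `A(α,β,φ)`: the coordinate ring of the union of the
axis `u = d = 0` and the surface `(1 - α - β) u d = φ(t)`. -/
abbrev Ab (α β : K) (φ : MvPolynomial (Fin n) K) : Type :=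
  RingAbelianization (A α β φ)

theorem ddu_iff_of_comm {B : Type*} [CommRing B] [Algebra K B] (α β : K) (u d w : B) :
    d * d * u = α • (d * u * d) + β • (u * d * d) + w * d ↔
      d * ((1 - α - β) • (u * d) - w) = 0 := by
  simp only [Algebra.smul_def, map_sub, map_one]
  constructor <;> intro h <;> linear_combination h

theorem duu_iff_of_comm {B : Type*} [CommRing B] [Algebra K B] (α β : K) (u d w : B) :
    d * u * u = α • (u * d * u) + β • (u * u * d) + u * w ↔
      u * ((1 - α - β) • (u * d) - w) = 0 := by
  simp only [Algebra.smul_def, map_sub, map_one]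
  constructor <;> intro h <;> linear_combination h

namespace Ab

section Generators

variable (α β : K) (φ : MvPolynomial (Fin n) K)

/-- The image of the base polynomial ring in the abelianization. -/
noncomputable def t : MvPolynomial (Fin n) K →ₐ[K] Ab α β φ :=
  (RingAbelianization.mk K (A α β φ)).comp (T α β φ)

/-- The image of `u` in the abelianization. -/
noncomputable def u : Ab α β φ :=
  RingAbelianization.mk K (A α β φ) (U α β φ)

/-- The image of `d` in the abelianization. -/
noncomputable def d : Ab α β φ :=
  RingAbelianization.mk K (A α β φ) (D α β φ)

/-- The equation `(1 - α - β) u d - φ(t)` of the surface component. -/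
noncomputable def surfaceEq : Ab α β φ :=
  (1 - α - β) • (u α β φ * d α β φ) - t α β φ φ

theorem u_mul_surfaceEq : u α β φ * surfaceEq α β φ = 0 := by
  have h := congrArg (RingAbelianization.mk K (A α β φ)) (D_mul_U_mul_U (α := α) (β := β) (φ := φ))
  simp only [map_mul, map_add, map_smul] at h
  exact (duu_iff_of_comm α β _ _ _).1 h

theorem d_mul_surfaceEq : d α β φ * surfaceEq α β φ = 0 := by
  have h := congrArg (RingAbelianization.mk K (A α β φ)) (D_mul_D_mul_U (α := α) (β := β) (φ := φ))
  simp only [map_mul, map_add, map_smul] at h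
  exact (ddu_iff_of_comm α β _ _ _).1 h

end Generators

variable {α β : K} {φ : MvPolynomial (Fin n) K} {B : Type*} [CommRing B] [Algebra K B]

theorem algHom_ext {f g : Ab α β φ →ₐ[K] B} (ht : ∀ p, f (t α β φ p) = g (t α β φ p))
    (hu : f (u α β φ) = g (u α β φ)) (hd : f (d α β φ) = g (d α β φ)) : f = g :=
  RingAbelianization.algHom_ext (DownUp.algHom_ext ht hu hd)

section Lift

variable (S : MvPolynomial (Fin n) K →ₐ[K] B) (v e : B)
  (hv : v * ((1 - α - β) • (v * e) - S φ) = 0) (he : e * ((1 - α - β) • (v * e) - S φ) = 0)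

/-- The universal property of the abelianized down-up algebra. -/
noncomputable def lift : Ab α β φ →ₐ[K] B :=
  RingAbelianization.lift (DownUp.lift S v e (fun _ _ ↦ mul_comm _ _)
    ((ddu_iff_of_comm α β v e _).2 he) ((duu_iff_of_comm α β v e _).2 hv))

@[simp]
theorem lift_t (p : MvPolynomial (Fin n) K) : lift S v e hv he (t α β φ p) = S p := by
  simp [lift, t]

@[simp]
theorem lift_u : lift S v e hv he (u α β φ) = v := by
  simp [lift, u]

@[simp]
theorem lift_d : lift S v e hv he (d α β φ) = e := by
  simp [lift, d]

end Lift

section Axis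

variable (α β φ) in
/-- Restriction of functions to the axis `u = d = 0`. -/
noncomputable def axis : Ab α β φ →ₐ[K] MvPolynomial (Fin n) K :=
  lift (AlgHom.id K _) 0 0 (zero_mul _) (zero_mul _)

@[simp]
theorem axis_t (p : MvPolynomial (Fin n) K) : axis α β φ (t α β φ p) = p :=
  lift_t ..

@[simp]
theorem axis_u : axis α β φ (u α β φ) = 0 :=
  lift_u ..

@[simp]
theorem axis_d : axis α β φ (d α β φ) = 0 :=
  lift_d ..

@[simp]
theorem axis_surfaceEq : axis α β φ (surfaceEq α β φ) = -φ := by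
  simp [surfaceEq]

theorem eq_comp_axis {χ : Ab α β φ →ₐ[K] B} (hu : χ (u α β φ) = 0) (hd : χ (d α β φ) = 0) :
    χ = (χ.comp (t α β φ)).comp (axis α β φ) :=
  algHom_ext (fun p ↦ by simp) (by simp [hu]) (by simp [hd])

theorem mul_surfaceEq_eq_zero {x : Ab α β φ} (hx : axis α β φ x = 0) :
    x * surfaceEq α β φ = 0 := by
  -- The annihilator of the surface equation contains `u` and `d`, hence the kernel of `axis`.
  let I := Ideal.torsionOf (Ab α β φ) (Ab α β φ) (surfaceEq α β φ)
  have h := eq_comp_axis (χ := Ideal.Quotient.mkₐ K I)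
    (Ideal.Quotient.eq_zero_iff_mem.2 (u_mul_surfaceEq α β φ))
    (Ideal.Quotient.eq_zero_iff_mem.2 (d_mul_surfaceEq α β φ))
  exact Ideal.Quotient.eq_zero_iff_mem.1 ((DFunLike.congr_fun h x).trans (by simp [hx]))

/-- Restriction of functions to the cylinder with coordinate `u` over a scheme mapping to the zero
locus of `φ`, with `d = 0`. -/
noncomputable def cylinder {S : MvPolynomial (Fin n) K →ₐ[K] B} (hS : S φ = 0) :
    Ab α β φ →ₐ[K] Polynomial B :=
  lift (Polynomial.CAlgHom.comp S) Polynomial.X 0 (by simp [hS]) (zero_mul _)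

theorem apply_axis_eq_zero_of_mul_u_eq_zero {S : MvPolynomial (Fin n) K →ₐ[K] B} (hS : S φ = 0)
    {x : Ab α β φ} (hx : x * u α β φ = 0) : S (axis α β φ x) = 0 := by
  have hcyl : cylinder hS x = 0 := by
    have h := congrArg (cylinder hS) hx
    rw [map_mul, map_zero, cylinder, lift_u] at h
    exact Polynomial.isRegular_X.right.mul_right_eq_zero_iff.1 h
  have hcomp : ((Polynomial.aeval 0).restrictScalars K).comp (cylinder hS) =
      S.comp (axis α β φ) :=
    algHom_ext (fun p ↦ by simp [cylinder]) (by simp [cylinder]) (by simp [cylinder])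
  have h := DFunLike.congr_fun hcomp x
  rw [AlgHom.comp_apply, hcyl, map_zero] at h
  exact h.symm

theorem dvd_axis_of_mul_u_eq_zero {x : Ab α β φ} (hx : x * u α β φ = 0) : φ ∣ axis α β φ x := by
  have hφ : Ideal.Quotient.mkₐ K (Ideal.span {φ}) φ = 0 :=
    Ideal.Quotient.eq_zero_iff_mem.2 (Ideal.mem_span_singleton_self φ)
  exact Ideal.mem_span_singleton.1
    (Ideal.Quotient.eq_zero_iff_mem.1 (apply_axis_eq_zero_of_mul_u_eq_zero hφ hx))

end Axis

section Surface

variable (α β φ) in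
/-- The involution exchanging `u` and `d`. -/
noncomputable def swap : Ab α β φ →ₐ[K] Ab α β φ :=
  lift (t α β φ) (d α β φ) (u α β φ)
    (by rw [mul_comm (d α β φ) (u α β φ)]; exact d_mul_surfaceEq α β φ)
    (by rw [mul_comm (d α β φ) (u α β φ)]; exact u_mul_surfaceEq α β φ)

theorem swap_swap (x : Ab α β φ) : swap α β φ (swap α β φ x) = x := by
  have h : (swap α β φ).comp (swap α β φ) = AlgHom.id K _ :=
    algHom_ext (fun p ↦ by simp [swap]) (by simp [swap]) (by simp [swap])
  exact DFunLike.congr_fun h x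

/-- The coordinate ring `K[t][u, u⁻¹]` of the chart `u ≠ 0` of the surface component. -/
abbrev UChart (K : Type) [Field K] (n : ℕ) : Type :=
  Localization.Away (Polynomial.X : Polynomial (MvPolynomial (Fin n) K))

variable (φ) in
/-- Restriction of functions to the chart `u ≠ 0` of the surface, where
`d = (1 - α - β)⁻¹ φ(t) u⁻¹`. -/
noncomputable def uChart (hαβ : 1 - α - β ≠ 0) : Ab α β φ →ₐ[K] UChart K n :=
  let ι := IsScalarTower.toAlgHom K (Polynomial (MvPolynomial (Fin n) K)) (UChart K n)
  have h : (1 - α - β) • (ι .X * ((1 - α - β)⁻¹ •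
      (ι (.C φ) * IsLocalization.Away.invSelf Polynomial.X))) - ι (.C φ) = 0 := by
    rw [mul_smul_comm, smul_inv_smul₀ hαβ, mul_left_comm, IsScalarTower.coe_toAlgHom',
      IsLocalization.Away.mul_invSelf, mul_one, sub_self]
  lift (ι.comp Polynomial.CAlgHom) (ι .X)
    ((1 - α - β)⁻¹ • (ι (.C φ) * IsLocalization.Away.invSelf Polynomial.X))
    (mul_eq_zero_of_right _ h) (mul_eq_zero_of_right _ h)

@[simp]
theorem uChart_t (hαβ : 1 - α - β ≠ 0) (p : MvPolynomial (Fin n) K) :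
    uChart φ hαβ (t α β φ p) = algebraMap _ _ (Polynomial.C p) := by
  simp [uChart]

@[simp]
theorem uChart_u (hαβ : 1 - α - β ≠ 0) :
    uChart φ hαβ (u α β φ) =
      algebraMap (Polynomial (MvPolynomial (Fin n) K)) (UChart K n) Polynomial.X := by
  simp [uChart]

variable (α β φ) in
/-- The map from the polynomial ring `K[t][u]` to the abelianization. -/
noncomputable def polyU : Polynomial (MvPolynomial (Fin n) K) →ₐ[K] Ab α β φ :=
  Polynomial.aevalTower (t α β φ) (u α β φ)

theorem uChart_polyU (hαβ : 1 - α - β ≠ 0) (p : Polynomial (MvPolynomial (Fin n) K)) :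
    uChart φ hαβ (polyU α β φ p) = algebraMap _ _ p := by
  have h : (uChart φ hαβ).comp (polyU α β φ) = IsScalarTower.toAlgHom K _ (UChart K n) := by
    ext <;> simp [polyU]
  exact DFunLike.congr_fun h p

variable [IsDomain B]

theorem apply_surfaceEq_eq_zero {χ : Ab α β φ →ₐ[K] B} (hu : χ (u α β φ) ≠ 0) :
    χ (surfaceEq α β φ) = 0 := by
  have h := congrArg χ (u_mul_surfaceEq α β φ)
  rw [map_mul, map_zero] at h
  exact (mul_eq_zero.1 h).resolve_left hu

theorem algHom_ext_of_apply_u_ne_zero (hαβ : 1 - α - β ≠ 0) {f g : Ab α β φ →ₐ[K] B}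
    (ht : ∀ p, f (t α β φ p) = g (t α β φ p)) (hu : f (u α β φ) = g (u α β φ))
    (hne : g (u α β φ) ≠ 0) : f = g := by
  refine algHom_ext ht hu ?_
  have hf := apply_surfaceEq_eq_zero (hu.trans_ne hne)
  have hg := apply_surfaceEq_eq_zero hne
  simp only [surfaceEq, map_sub, map_smul, map_mul, sub_eq_zero, ht, hu] at hf hg
  exact mul_left_cancel₀ hne (smul_right_injective B hαβ (hf.trans hg.symm))

theorem exists_comp_uChart_eq (hαβ : 1 - α - β ≠ 0) {χ : Ab α β φ →ₐ[K] B}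
    (hu : χ (u α β φ) ≠ 0) :
    ∃ ψ : UChart K n →ₐ[K] FractionRing B,
      ψ.comp (uChart φ hαβ) = (IsScalarTower.toAlgHom K B (FractionRing B)).comp χ := by
  let χ' := (IsScalarTower.toAlgHom K B (FractionRing B)).comp χ
  have hu' : χ' (u α β φ) ≠ 0 := by simpa [χ'] using hu
  have hunit : IsUnit (χ'.comp (polyU α β φ) .X) := by simpa [polyU] using hu'
  refine ⟨IsLocalization.Away.liftAlgHom Polynomial.X hunit,
    algHom_ext_of_apply_u_ne_zero hαβ (fun p ↦ ?_) ?_ hu'⟩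
  · simp [polyU, χ']
  · simp [polyU, χ']

theorem apply_eq_zero_of_uChart_eq_zero (hαβ : 1 - α - β ≠ 0) {χ : Ab α β φ →ₐ[K] B}
    (hu : χ (u α β φ) ≠ 0) {x : Ab α β φ} (hx : uChart φ hαβ x = 0) : χ x = 0 := by
  obtain ⟨ψ, hψ⟩ := exists_comp_uChart_eq hαβ hu
  have h := DFunLike.congr_fun hψ x
  rw [AlgHom.comp_apply, hx, map_zero] at h
  exact (FaithfulSMul.algebraMap_eq_zero_iff B (FractionRing B)).1 h.symm

theorem injective_comp_polyU (hαβ : 1 - α - β ≠ 0) {χ : Ab α β φ →ₐ[K] B}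
    (hu : χ (u α β φ) ≠ 0) {g : Ab α β φ} (hg : χ g ≠ 0) (hker : ∀ x, χ x = 0 → x * g = 0) :
    Function.Injective (χ.comp (polyU α β φ)) := by
  refine (injective_iff_map_eq_zero _).2 fun p hp ↦ ?_
  have hpg := congrArg (uChart φ hαβ) (hker (polyU α β φ p) hp)
  rw [map_mul, map_zero, uChart_polyU] at hpg
  have : IsDomain (UChart K n) := IsLocalization.isDomain_localization <|
    powers_le_nonZeroDivisors_of_noZeroDivisors Polynomial.X_ne_zero
  have hp' := (mul_eq_zero.1 hpg).resolve_right
    fun h ↦ hg (apply_eq_zero_of_uChart_eq_zero hαβ hu h)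
  exact (FaithfulSMul.algebraMap_eq_zero_iff _ (UChart K n)).1 hp'

theorem apply_u_eq_zero (hαβ : 1 - α - β ≠ 0) {χ : Ab α β φ →ₐ[K] MvPolynomial (Fin n) K}
    {g : Ab α β φ} (hg : χ g ≠ 0) (hker : ∀ x, χ x = 0 → x * g = 0) : χ (u α β φ) = 0 := by
  by_contra hu
  exact not_injective_algHom_polynomial_mvPolynomial _ (injective_comp_polyU hαβ hu hg hker)

theorem apply_d_eq_zero (hαβ : 1 - α - β ≠ 0) {χ : Ab α β φ →ₐ[K] MvPolynomial (Fin n) K}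
    {g : Ab α β φ} (hg : χ g ≠ 0) (hker : ∀ x, χ x = 0 → x * g = 0) : χ (d α β φ) = 0 := by
  have h : χ.comp (swap α β φ) (u α β φ) = 0 := by
    refine apply_u_eq_zero hαβ (g := swap α β φ g) (by simpa [swap_swap] using hg) fun x hx ↦ ?_
    rw [← swap_swap x, ← map_mul, hker (swap α β φ x) hx, map_zero]
  simpa [swap] using h

end Surface

section Isomorphism

variable {φ₁ φ₂ : MvPolynomial (Fin n) K}

theorem exists_axis_apply_eq (hαβ : 1 - α - β ≠ 0) (hφ₂ : φ₂ ≠ 0)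
    (Θ : Ab α β φ₁ ≃ₐ[K] Ab α β φ₂) :
    ∃ σ : MvPolynomial (Fin n) K →ₐ[K] MvPolynomial (Fin n) K,
      (∀ x, axis α β φ₂ (Θ x) = σ (axis α β φ₁ x)) ∧ σ φ₁ ∣ φ₂ := by
  let χ := (axis α β φ₂).comp Θ.toAlgHom
  have hg : χ (Θ.symm (surfaceEq α β φ₂)) ≠ 0 := by simpa [χ] using hφ₂
  have hker (x) (hx : χ x = 0) : x * Θ.symm (surfaceEq α β φ₂) = 0 := by
    apply Θ.injective
    rw [map_mul, Θ.apply_symm_apply, map_zero]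
    exact mul_surfaceEq_eq_zero hx
  have hu : χ (u α β φ₁) = 0 := apply_u_eq_zero hαβ hg hker
  have hχ (x) : χ x = χ (t α β φ₁ (axis α β φ₁ x)) :=
    DFunLike.congr_fun (eq_comp_axis hu (apply_d_eq_zero hαβ hg hker)) x
  refine ⟨χ.comp (t α β φ₁), hχ, ?_⟩
  have hdvd : φ₁ ∣ axis α β φ₁ (Θ.symm (surfaceEq α β φ₂)) :=
    dvd_axis_of_mul_u_eq_zero (by rw [mul_comm, hker _ hu])
  have h := map_dvd (χ.comp (t α β φ₁)) hdvd
  rw [AlgHom.comp_apply _ _ (axis α β φ₁ _), ← hχ] at h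
  simpa [χ] using h

theorem exists_algEquiv_associated (hαβ : 1 - α - β ≠ 0) (hφ₂ : φ₂ ≠ 0)
    (Θ : Ab α β φ₁ ≃ₐ[K] Ab α β φ₂) :
    ∃ σ : MvPolynomial (Fin n) K ≃ₐ[K] MvPolynomial (Fin n) K, Associated φ₂ (σ φ₁) := by
  obtain ⟨σ, hσ, hσφ⟩ := exists_axis_apply_eq hαβ hφ₂ Θ
  have hφ₁ : φ₁ ≠ 0 := by
    rintro rfl
    exact hφ₂ (zero_dvd_iff.1 (map_zero σ ▸ hσφ))
  obtain ⟨τ, hτ, hτφ⟩ := exists_axis_apply_eq hαβ hφ₁ Θ.symm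
  have hστ (p) : σ (τ p) = p := by
    simpa [← hσ] using (congrArg σ (hτ (t α β φ₂ p))).symm
  have hτσ (p) : τ (σ p) = p := by
    simpa [← hτ] using (congrArg τ (hσ (t α β φ₁ p))).symm
  refine ⟨.ofAlgHom σ τ (AlgHom.ext hστ) (AlgHom.ext hτσ), associated_of_dvd_dvd ?_ hσφ⟩
  simpa [hστ] using map_dvd σ hτφ

end Isomorphism

end Ab

end Abelianization

theorem exists_smul_eq_of_algEquiv {K : Type} [Field K] {n : ℕ} {α β : K} (hαβ : 1 - α - β ≠ 0)
    {φ₁ φ₂ : MvPolynomial (Fin n) K} (Θ : Ab α β φ₁ ≃ₐ[K] Ab α β φ₂) :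
    ∃ (η : K) (σ : MvPolynomial (Fin n) K ≃ₐ[K] MvPolynomial (Fin n) K),
      η ≠ 0 ∧ η • φ₂ = σ φ₁ := by
  by_cases hφ₂ : φ₂ = 0
  · have hφ₁ : φ₁ = 0 := by
      by_contra hφ₁
      obtain ⟨τ, -, hτ⟩ := Ab.exists_axis_apply_eq hαβ hφ₁ Θ.symm
      rw [hφ₂, map_zero] at hτ
      exact hφ₁ (zero_dvd_iff.1 hτ)
    exact ⟨1, .refl, one_ne_zero, by simp [hφ₁, hφ₂]⟩
  · obtain ⟨σ, hσ⟩ := Ab.exists_algEquiv_associated hαβ hφ₂ Θ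
    obtain ⟨η, hη, h⟩ := exists_smul_eq_of_associated hσ
    exact ⟨η, σ, hη, h⟩

end DownUp

open DownUp in
theorem downUp_iso_iff_general {K : Type} [Field K] {n : ℕ} {α β : K} (hαβ : 1 - α - β ≠ 0)
    (φ₁ φ₂ : MvPolynomial (Fin n) K) :
    Nonempty (A α β φ₁ ≃ₐ[K] A α β φ₂) ↔
      ∃ (η : K) (σ : MvPolynomial (Fin n) K ≃ₐ[K] MvPolynomial (Fin n) K),
        η ≠ 0 ∧ η • φ₂ = σ φ₁ :=
  ⟨fun ⟨Θ⟩ ↦ exists_smul_eq_of_algEquiv hαβ (RingAbelianization.congr Θ),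
    fun ⟨_, σ, hη, h⟩ ↦ nonempty_algEquiv_of_smul_eq α β hη σ h⟩

open DownUp MvPolynomial in
/-- Let char K = 0, r, s ∈ K* with r, s ≠ 1 and no multiplicative relations
(rⁱsʲ = 1 ⟹ i = j = 0), α = r + s, β = −rs, n = 1 (parameter t = X 0). Then
A(α,β,φ₁) ≅ A(α,β,φ₂) as K-algebras if and only if there exist η, a ∈ K* and
b ∈ K with η·φ₂(t) = φ₁(at + b). -/
theorem downUp_iso_iff {K : Type} [Field K] [CharZero K]
    (r s : K) (hr : r ≠ 0) (hs : s ≠ 0) (hr1 : r ≠ 1) (hs1 : s ≠ 1)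
    (hrs : ∀ i j : ℤ, r ^ i * s ^ j = 1 → i = 0 ∧ j = 0)
    (φ₁ φ₂ : MvPolynomial (Fin 1) K) :
    Nonempty (A (r + s) (-(r * s)) φ₁ ≃ₐ[K] A (r + s) (-(r * s)) φ₂) ↔
      ∃ η a b : K, η ≠ 0 ∧ a ≠ 0 ∧
        η • φ₂ = aeval (fun _ : Fin 1 => C a * X 0 + C b) φ₁ := by
  have hαβ : 1 - (r + s) - -(r * s) = (1 - r) * (1 - s) := by ring
  rw [downUp_iso_iff_general (hαβ ▸ mul_ne_zero (sub_ne_zero.2 hr1.symm) (sub_ne_zero.2 hs1.symm))]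
  simp only [exists_and_left, exists_algEquiv_apply_eq_iff, Fin.default_eq_zero]
end
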